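/- Let (𝛑, 𝛍) be a Graphon Mean Field Equilibrium with α ↦ π^α Lipschitz continuous up to finitely many discontinuities. Under Assumptions (W) and (Lip), for any ε, p > 0 there exists N' such that for all N > N', the N-agent policy tuple (π¹,…,π^N) = Γ_N(𝛑) is an (ε,p)-Markov–Nash equilibrium: J^N_i(π¹,…,π^N) ≥ max_{π∈Π} J^N_i(π¹,…,π^{i−1},π,π^{i+1},…,π^N) − ε for all i in some set 𝒲_N ⊆ 𝒱_N with |𝒲_N| ≥ ⌊(1−p)N⌋. -/

import Mathlib

open MeasureTheory Filter
open scoped BigOperators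

namespace GMFG

variable {𝒳 𝒰 : Type*}

/-- The probability simplex 𝒫(𝒳) on a finite set, as probability mass functions. -/
def simplex (𝒳 : Type*) [Fintype 𝒳] : Set (𝒳 → ℝ) :=
  {p | (∀ x, 0 ≤ p x) ∧ ∑ x, p x = 1}

/-- The set ℬ₁(𝒳) of (sub-probability) measures with total mass at most 1,
as mass functions. -/
def subProb (𝒳 : Type*) [Fintype 𝒳] : Set (𝒳 → ℝ) :=
  {p | (∀ x, 0 ≤ p x) ∧ ∑ x, p x ≤ 1}

/-- L¹ distance between measures on a finite set. -/
noncomputable def l1dist [Fintype 𝒳] (ν ν' : 𝒳 → ℝ) : ℝ := ∑ x, |ν x - ν' x|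

/-- Markovian feedback policies π ∈ Π = 𝒫(𝒰)^{𝒯×𝒳}. -/
def IsPolicy [Fintype 𝒰] (π : ℕ → 𝒳 → 𝒰 → ℝ) : Prop :=
  ∀ t x, (∀ u, 0 ≤ π t x u) ∧ ∑ u, π t x u = 1

/-- P : 𝒳×𝒰×ℬ₁(𝒳) → 𝒫(𝒳) is a transition kernel. -/
def IsKernel [Fintype 𝒳] [Fintype 𝒰] (P : 𝒳 → 𝒰 → (𝒳 → ℝ) → 𝒳 → ℝ) : Prop :=
  ∀ x u ν, ν ∈ subProb 𝒳 → P x u ν ∈ simplex 𝒳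

/-- Lipschitz continuity of the transition kernel w.r.t. the L¹ norm. -/
def KernelLipschitz [Fintype 𝒳] [Fintype 𝒰] (P : 𝒳 → 𝒰 → (𝒳 → ℝ) → 𝒳 → ℝ) (L : ℝ) : Prop :=
  ∀ x u ν ν', ν ∈ subProb 𝒳 → ν' ∈ subProb 𝒳 → l1dist (P x u ν) (P x u ν') ≤ L * l1dist ν ν'

/-- Lipschitz continuity of the reward w.r.t. the L¹ norm. -/
def RewardLipschitz [Fintype 𝒳] [Fintype 𝒰] (r : 𝒳 → 𝒰 → (𝒳 → ℝ) → ℝ) (L : ℝ) : Prop :=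
  ∀ x u ν ν', ν ∈ subProb 𝒳 → ν' ∈ subProb 𝒳 → |r x u ν - r x u ν'| ≤ L * l1dist ν ν'

/-- A graphon: symmetric, measurable, [0,1]-valued. -/
def IsGraphon (W : ℝ → ℝ → ℝ) : Prop :=
  Measurable (Function.uncurry W) ∧ (∀ a b, W a b = W b a) ∧ ∀ a b, W a b ∈ Set.Icc (0:ℝ) 1

/-- Lipschitz continuity of a graphon on [0,1]². -/
def GraphonLipschitz (W : ℝ → ℝ → ℝ) (L : ℝ) : Prop :=
  ∀ a b a' b' : ℝ, a ∈ Set.Icc (0:ℝ) 1 → b ∈ Set.Icc (0:ℝ) 1 → a' ∈ Set.Icc (0:ℝ) 1 →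
    b' ∈ Set.Icc (0:ℝ) 1 → |W a b - W a' b'| ≤ L * (|a - a'| + |b - b'|)

/-- The neighborhood mean field 𝔾^α = ∫₀¹ W(α,β) ν^β dβ of a state marginal ensemble ν. -/
noncomputable def nbhd [Fintype 𝒳] (W : ℝ → ℝ → ℝ) (ν : ℝ → 𝒳 → ℝ) (α : ℝ) : 𝒳 → ℝ :=
  fun x => ∫ β in Set.Ioc (0:ℝ) 1, W α β * ν β x

/-- 𝛍 = Ψ(𝛑): the (measurable) mean field ensemble generated by the policy ensemble 𝛑,
via μ^α_0 = μ₀ and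
μ^α_{t+1}(x') = Σ_{x,u} μ^α_t(x) π^α_t(u|x) P(x'|x,u,𝔾^α_t). -/
def IsMeanFieldOf [Fintype 𝒳] [Fintype 𝒰] (W : ℝ → ℝ → ℝ) (P : 𝒳 → 𝒰 → (𝒳 → ℝ) → 𝒳 → ℝ)
    (μ0 : 𝒳 → ℝ) (πe : ℝ → ℕ → 𝒳 → 𝒰 → ℝ) (μ : ℕ → ℝ → 𝒳 → ℝ) : Prop :=
  (∀ t x, Measurable fun α => μ t α x) ∧
  (∀ α ∈ Set.Icc (0:ℝ) 1, μ 0 α = μ0) ∧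
  ∀ t : ℕ, ∀ α ∈ Set.Icc (0:ℝ) 1, ∀ x' : 𝒳,
    μ (t+1) α x' = ∑ x, μ t α x * ∑ u, πe α t x u * P x u (nbhd W (μ t) α) x'

/-- The law of the state of a single mean field agent with neighborhood mean field
G and policy π: X_0 ∼ μ₀, U_t ∼ π_t(·|X_t), X_{t+1} ∼ P(·|X_t,U_t,G_t). -/
noncomputable def stateLaw [Fintype 𝒳] [Fintype 𝒰] (P : 𝒳 → 𝒰 → (𝒳 → ℝ) → 𝒳 → ℝ)
    (μ0 : 𝒳 → ℝ) (G : ℕ → 𝒳 → ℝ) (π : ℕ → 𝒳 → 𝒰 → ℝ) : ℕ → 𝒳 → ℝ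
  | 0 => μ0
  | (t+1) => fun x' => ∑ x, stateLaw P μ0 G π t x * ∑ u, π t x u * P x u (G t) x'

/-- Mean field objective J(π) = E[Σ_{t<T} r(X_t,U_t,G_t)] of a single agent whose
neighborhood mean field is G. -/
noncomputable def Jmf [Fintype 𝒳] [Fintype 𝒰] (T : ℕ) (r : 𝒳 → 𝒰 → (𝒳 → ℝ) → ℝ)
    (P : 𝒳 → 𝒰 → (𝒳 → ℝ) → 𝒳 → ℝ) (μ0 : 𝒳 → ℝ) (G : ℕ → 𝒳 → ℝ) (π : ℕ → 𝒳 → 𝒰 → ℝ) : ℝ :=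
  ∑ t ∈ Finset.range T, ∑ x, stateLaw P μ0 G π t x * ∑ u, π t x u * r x u (G t)

/-- A Graphon Mean Field Equilibrium: a measurable policy ensemble 𝛑 and mean field
ensemble 𝛍 with 𝛍 = Ψ(𝛑) and π^α optimal for J^𝛍_α for every α ∈ [0,1]. -/
def IsGMFE [Fintype 𝒳] [Fintype 𝒰] (T : ℕ) (W : ℝ → ℝ → ℝ) (P : 𝒳 → 𝒰 → (𝒳 → ℝ) → 𝒳 → ℝ)
    (r : 𝒳 → 𝒰 → (𝒳 → ℝ) → ℝ) (μ0 : 𝒳 → ℝ)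
    (πe : ℝ → ℕ → 𝒳 → 𝒰 → ℝ) (μ : ℕ → ℝ → 𝒳 → ℝ) : Prop :=
  (∀ t x u, Measurable fun α => πe α t x u) ∧
  (∀ α ∈ Set.Icc (0:ℝ) 1, IsPolicy (πe α)) ∧
  IsMeanFieldOf W P μ0 πe μ ∧
  ∀ α ∈ Set.Icc (0:ℝ) 1, ∀ π' : ℕ → 𝒳 → 𝒰 → ℝ, IsPolicy π' →
    Jmf T r P μ0 (fun t => nbhd W (μ t) α) π' ≤ Jmf T r P μ0 (fun t => nbhd W (μ t) α) (πe α)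

/-- α ↦ π^α is Lipschitz continuous up to a finite set D of discontinuities. -/
def EnsembleLipschitzUpTo [Fintype 𝒳] [Fintype 𝒰] (πe : ℝ → ℕ → 𝒳 → 𝒰 → ℝ) : Prop :=
  ∃ (L : ℝ) (D : Finset ℝ), ∀ (t : ℕ) (x : 𝒳) (u : 𝒰),
    ∀ α ∈ Set.Icc (0:ℝ) 1, ∀ β ∈ Set.Icc (0:ℝ) 1,
      (∀ d ∈ D, d ∉ Set.uIcc α β) → |πe α t x u - πe β t x u| ≤ L * |α - β|

/-- Edge indicators of a simple (undirected) graph. -/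
def IsEdgeWeights {N : ℕ} (ξ : Fin N → Fin N → ℝ) : Prop :=
  (∀ i j, ξ i j = 0 ∨ ξ i j = 1) ∧ ∀ i j, ξ i j = ξ j i

/-- Empirical neighborhood mean field 𝔾ⁱ = (1/N) Σ_j ξ_{ij} δ_{X^j}. -/
noncomputable def empNbhd [Fintype 𝒳] [DecidableEq 𝒳] {N : ℕ} (ξ : Fin N → Fin N → ℝ)
    (X : Fin N → 𝒳) (i : Fin N) : 𝒳 → ℝ :=
  fun x => (N : ℝ)⁻¹ * ∑ j, ξ i j * (if X j = x then 1 else 0)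

/-- The joint law of the N agents' states at time t: X^i_0 ∼ μ₀ i.i.d.,
U^i_t ∼ π^i_t(·|X^i_t), X^i_{t+1} ∼ P(·|X^i_t,U^i_t,𝔾^i_t) conditionally independently. -/
noncomputable def jointLaw [Fintype 𝒳] [DecidableEq 𝒳] [Fintype 𝒰] {N : ℕ}
    (P : 𝒳 → 𝒰 → (𝒳 → ℝ) → 𝒳 → ℝ) (μ0 : 𝒳 → ℝ) (ξ : Fin N → Fin N → ℝ)
    (πs : Fin N → ℕ → 𝒳 → 𝒰 → ℝ) : ℕ → (Fin N → 𝒳) → ℝ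
  | 0 => fun X => ∏ i, μ0 (X i)
  | (t+1) => fun Y => ∑ X : Fin N → 𝒳, jointLaw P μ0 ξ πs t X *
      ∏ i, ∑ u, πs i t (X i) u * P (X i) u (empNbhd ξ X i) (Y i)

/-- The objective J^N_i = E[Σ_{t<T} r(X^i_t,U^i_t,𝔾^i_t)] of agent i in the N-agent game. -/
noncomputable def JN [Fintype 𝒳] [DecidableEq 𝒳] [Fintype 𝒰] {N : ℕ} (T : ℕ)
    (r : 𝒳 → 𝒰 → (𝒳 → ℝ) → ℝ) (P : 𝒳 → 𝒰 → (𝒳 → ℝ) → 𝒳 → ℝ) (μ0 : 𝒳 → ℝ)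
    (ξ : Fin N → Fin N → ℝ) (πs : Fin N → ℕ → 𝒳 → 𝒰 → ℝ) (i : Fin N) : ℝ :=
  ∑ t ∈ Finset.range T, ∑ X : Fin N → 𝒳, jointLaw P μ0 ξ πs t X *
    ∑ u, πs i t (X i) u * r (X i) u (empNbhd ξ X i)

/-- Γ_N(𝛑) = (π^{1/N},…,π^{N/N}) (agent i : Fin N has graphon index (i+1)/N). -/
noncomputable def gammaN (πe : ℝ → ℕ → 𝒳 → 𝒰 → ℝ) (N : ℕ) : Fin N → ℕ → 𝒳 → 𝒰 → ℝ :=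
  fun i => πe ((((i : ℕ) : ℝ) + 1) / N)

/-- The step graphon W_N of a finite graph: W_N(x,y) = ξ_{⌈Nx⌉,⌈Ny⌉}. -/
noncomputable def stepGraphon {N : ℕ} (ξ : Fin N → Fin N → ℝ) : ℝ → ℝ → ℝ := fun a b =>
  ∑ i : Fin N, ∑ j : Fin N,
    (if ((i : ℕ) : ℝ) / N < a ∧ a ≤ (((i : ℕ) : ℝ) + 1) / N then 1 else 0) *
    (if ((j : ℕ) : ℝ) / N < b ∧ b ≤ (((j : ℕ) : ℝ) + 1) / N then 1 else 0) * ξ i j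

/-- Assumption (W): ‖W_N − W‖_{L∞→L1} → 0, i.e.
sup_{‖g‖∞ ≤ 1} ∫₀¹ |∫₀¹ (W_N(α,β) − W(α,β)) g(β) dβ| dα → 0. -/
def OpConvergesTo (WN : (N : ℕ) → ℝ → ℝ → ℝ) (W : ℝ → ℝ → ℝ) : Prop :=
  ∀ ε > (0:ℝ), ∃ N₀ : ℕ, ∀ N ≥ N₀, ∀ g : ℝ → ℝ, Measurable g → (∀ β, |g β| ≤ 1) →
    (∫ α in Set.Ioc (0:ℝ) 1, |∫ β in Set.Ioc (0:ℝ) 1, (WN N α β - W α β) * g β|) ≤ ε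

/-- ‖W_N − W‖_{L∞→L1} = O(1/√N). -/
def OpRateSqrt (WN : (N : ℕ) → ℝ → ℝ → ℝ) (W : ℝ → ℝ → ℝ) : Prop :=
  ∃ C : ℝ, ∀ N : ℕ, 1 ≤ N → ∀ g : ℝ → ℝ, Measurable g → (∀ β, |g β| ≤ 1) →
    (∫ α in Set.Ioc (0:ℝ) 1, |∫ β in Set.Ioc (0:ℝ) 1, (WN N α β - W α β) * g β|) ≤ C / Real.sqrt N

/-- 𝛍^N_t(f) = ∫₀¹ f(X^{⌈Nα⌉}, α) dα, the integral of f against the random empirical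
step measure ensemble. -/
noncomputable def empInt [Fintype 𝒳] {N : ℕ} (f : 𝒳 → ℝ → ℝ) (X : Fin N → 𝒳) : ℝ :=
  ∑ i : Fin N, ∫ α in Set.Ioc (((i : ℕ) : ℝ) / N) ((((i : ℕ) : ℝ) + 1) / N), f (X i) α

/-- 𝛍_t(f) = ∫₀¹ Σ_x f(x,α) μ^α_t(x) dα. -/
noncomputable def mfInt [Fintype 𝒳] (f : 𝒳 → ℝ → ℝ) (ν : ℝ → 𝒳 → ℝ) : ℝ :=
  ∫ α in Set.Ioc (0:ℝ) 1, ∑ x, f x α * ν α x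

/-- The representative α_m = (m+1)/M of the m-th equivalence class Ĩ_m = (m/M,(m+1)/M]. -/
noncomputable def rep (M : ℕ) (m : Fin M) : ℝ := (((m : ℕ) : ℝ) + 1) / M

/-- Discretized neighborhood mean field 𝔾̂^{α_m} = (1/M) Σ_n W(α_m,α_n) ν^{α_n}. -/
noncomputable def approxNbhd [Fintype 𝒳] {M : ℕ} (W : ℝ → ℝ → ℝ) (ν : Fin M → 𝒳 → ℝ)
    (m : Fin M) : 𝒳 → ℝ :=
  fun x => (M : ℝ)⁻¹ * ∑ n, W (rep M m) (rep M n) * ν n x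

/-- The approximate mean field μ̂ = Ψ̂(𝛑) of the M equivalence classes method. -/
noncomputable def approxMF [Fintype 𝒳] [Fintype 𝒰] {M : ℕ} (W : ℝ → ℝ → ℝ)
    (P : 𝒳 → 𝒰 → (𝒳 → ℝ) → 𝒳 → ℝ) (μ0 : 𝒳 → ℝ) (πm : Fin M → ℕ → 𝒳 → 𝒰 → ℝ) :
    ℕ → Fin M → 𝒳 → ℝ
  | 0 => fun _ => μ0
  | (t+1) => fun m x' => ∑ x, approxMF W P μ0 πm t m x *
      ∑ u, πm m t x u * P x u (approxNbhd W (approxMF W P μ0 πm t) m) x'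

/-- A solution (𝛑, 𝛍) of the M equivalence classes method: 𝛑 is determined by policies
π^{α_m} (one per class), each optimal for the generated approximate mean field 𝛍 = Ψ̂(𝛑). -/
def IsEqClassSolution [Fintype 𝒳] [Fintype 𝒰] (T : ℕ) {M : ℕ} (W : ℝ → ℝ → ℝ)
    (P : 𝒳 → 𝒰 → (𝒳 → ℝ) → 𝒳 → ℝ) (r : 𝒳 → 𝒰 → (𝒳 → ℝ) → ℝ) (μ0 : 𝒳 → ℝ)
    (πm : Fin M → ℕ → 𝒳 → 𝒰 → ℝ) : Prop :=
  (∀ m, IsPolicy (πm m)) ∧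
  ∀ m, ∀ π' : ℕ → 𝒳 → 𝒰 → ℝ, IsPolicy π' →
    Jmf T r P μ0 (fun t => approxNbhd W (approxMF W P μ0 πm t) m) π'
      ≤ Jmf T r P μ0 (fun t => approxNbhd W (approxMF W P μ0 πm t) m) (πm m)

/-- The optimal action value function Q with k steps to go from time t,
Q(t,x,u) = r(x,u,G_t) + Σ_{x'} P(x'|x,u,G_t) max_{u'} Q(t+1,x',u'). -/
noncomputable def Qfun [Fintype 𝒳] [Fintype 𝒰] [Nonempty 𝒰] (r : 𝒳 → 𝒰 → (𝒳 → ℝ) → ℝ)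
    (P : 𝒳 → 𝒰 → (𝒳 → ℝ) → 𝒳 → ℝ) (G : ℕ → 𝒳 → ℝ) : ℕ → ℕ → 𝒳 → 𝒰 → ℝ
  | 0 => fun _ _ _ => 0
  | (k+1) => fun t x u => r x u (G t) + ∑ x', P x u (G t) x' *
      Finset.univ.sup' Finset.univ_nonempty (fun u' => Qfun r P G k (t+1) x' u')

/-- The Boltzmann (softmax) policy Φ̂_η(𝛍) of the M equivalence classes method with
horizon T, temperature η and block mean field ν. -/
noncomputable def boltzmann [Fintype 𝒳] [Fintype 𝒰] [Nonempty 𝒰] (T : ℕ) (η : ℝ)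
    (r : 𝒳 → 𝒰 → (𝒳 → ℝ) → ℝ) (P : 𝒳 → 𝒰 → (𝒳 → ℝ) → 𝒳 → ℝ) (W : ℝ → ℝ → ℝ) {M : ℕ}
    (ν : ℕ → Fin M → 𝒳 → ℝ) : Fin M → ℕ → 𝒳 → 𝒰 → ℝ :=
  fun m t x u =>
    Real.exp (Qfun r P (fun s => approxNbhd W (ν s) m) (T - t) t x u / η) /
      ∑ u' : 𝒰, Real.exp (Qfun r P (fun s => approxNbhd W (ν s) m) (T - t) t x u' / η)

/-- One step 𝛍 ↦ Ψ̂(Φ̂_η(𝛍)) of the Boltzmann fixed point iteration. -/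
noncomputable def boltzIter [Fintype 𝒳] [Fintype 𝒰] [Nonempty 𝒰] (T : ℕ) (η : ℝ)
    (r : 𝒳 → 𝒰 → (𝒳 → ℝ) → ℝ) (P : 𝒳 → 𝒰 → (𝒳 → ℝ) → 𝒳 → ℝ) (W : ℝ → ℝ → ℝ) (μ0 : 𝒳 → ℝ)
    {M : ℕ} (ν : ℕ → Fin M → 𝒳 → ℝ) : ℕ → Fin M → 𝒳 → ℝ :=
  fun t => approxMF W P μ0 (boltzmann T η r P W ν) t


/-- One-step kernel of an agent using policy π. -/
noncomputable def stepK [Fintype 𝒳] [Fintype 𝒰] (P : 𝒳 → 𝒰 → (𝒳 → ℝ) → 𝒳 → ℝ)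
    (π : ℕ → 𝒳 → 𝒰 → ℝ) (t : ℕ) (x : 𝒳) (g : 𝒳 → ℝ) (y : 𝒳) : ℝ := ∑ u, π t x u * P x u g y

lemma simplex_le_one [Fintype 𝒳] {q : 𝒳 → ℝ} (hq : q ∈ simplex 𝒳) (x : 𝒳) : q x ≤ 1 := by
  rw [← hq.2]
  exact Finset.single_le_sum (fun y _ => hq.1 y) (Finset.mem_univ x)

lemma stepK_simplex [Fintype 𝒳] [Fintype 𝒰] {P : 𝒳 → 𝒰 → (𝒳 → ℝ) → 𝒳 → ℝ} (hP : IsKernel P)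
    {π : ℕ → 𝒳 → 𝒰 → ℝ} (hπ : IsPolicy π) (t : ℕ) (x : 𝒳) {g : 𝒳 → ℝ} (hg : g ∈ subProb 𝒳) :
    stepK P π t x g ∈ simplex 𝒳 := by
  constructor
  · intro y
    exact Finset.sum_nonneg fun u _ => mul_nonneg ((hπ t x).1 u) ((hP x u g hg).1 y)
  · unfold stepK
    rw [Finset.sum_comm]
    simp_rw [← Finset.mul_sum]
    rw [← (hπ t x).2]
    exact Finset.sum_congr rfl fun u _ => by rw [(hP x u g hg).2, mul_one]

lemma l1dist_nonneg [Fintype 𝒳] (g g' : 𝒳 → ℝ) : 0 ≤ l1dist g g' :=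
  Finset.sum_nonneg fun _ _ => abs_nonneg _

lemma policy_avg_abs [Fintype 𝒰] {π : ℕ → 𝒳 → 𝒰 → ℝ} (hπ : IsPolicy π) (t : ℕ) (x : 𝒳)
    {f : 𝒰 → ℝ} {B : ℝ} (hf : ∀ u, |f u| ≤ B) : |∑ u, π t x u * f u| ≤ B := by
  calc |∑ u, π t x u * f u| ≤ ∑ u, |π t x u * f u| := Finset.abs_sum_le_sum_abs _ _
    _ ≤ ∑ u, π t x u * B := Finset.sum_le_sum fun u _ => by
        rw [abs_mul, abs_of_nonneg ((hπ t x).1 u)]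
        exact mul_le_mul_of_nonneg_left (hf u) ((hπ t x).1 u)
    _ = B := by rw [← Finset.sum_mul, (hπ t x).2, one_mul]

lemma stepK_lip [Fintype 𝒳] [Fintype 𝒰] {P : 𝒳 → 𝒰 → (𝒳 → ℝ) → 𝒳 → ℝ} {LP : ℝ}
    (hPLip : KernelLipschitz P LP)
    {π : ℕ → 𝒳 → 𝒰 → ℝ} (hπ : IsPolicy π) (t : ℕ) (x : 𝒳) {g g' : 𝒳 → ℝ}
    (hg : g ∈ subProb 𝒳) (hg' : g' ∈ subProb 𝒳) :
    ∑ y, |stepK P π t x g y - stepK P π t x g' y| ≤ |LP| * l1dist g g' := by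
  calc ∑ y, |stepK P π t x g y - stepK P π t x g' y|
      ≤ ∑ y, ∑ u, π t x u * |P x u g y - P x u g' y| := by
        refine Finset.sum_le_sum fun y _ => ?_
        unfold stepK
        rw [← Finset.sum_sub_distrib]
        refine (Finset.abs_sum_le_sum_abs _ _).trans (Finset.sum_le_sum fun u _ => ?_)
        rw [← mul_sub, abs_mul, abs_of_nonneg ((hπ t x).1 u)]
    _ = ∑ u, π t x u * l1dist (P x u g) (P x u g') := by
        rw [Finset.sum_comm]
        simp_rw [← Finset.mul_sum]
        rfl
    _ ≤ |LP| * l1dist g g' := by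
        refine (le_abs_self _).trans (policy_avg_abs hπ t x fun u => ?_)
        rw [abs_of_nonneg (l1dist_nonneg _ _)]
        exact (hPLip x u g g' hg hg').trans
          (mul_le_mul_of_nonneg_right (le_abs_self _) (l1dist_nonneg _ _))

lemma empNbhd_subProb [Fintype 𝒳] [DecidableEq 𝒳] {N : ℕ} {ξ : Fin N → Fin N → ℝ}
    (hξ : IsEdgeWeights ξ) (X : Fin N → 𝒳) (i : Fin N) : empNbhd ξ X i ∈ subProb 𝒳 := by
  have h01 : ∀ j, 0 ≤ ξ i j ∧ ξ i j ≤ 1 := fun j => by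
    rcases hξ.1 i j with h | h <;> rw [h] <;> norm_num
  constructor
  · intro x
    unfold empNbhd
    refine mul_nonneg (by positivity) (Finset.sum_nonneg fun j _ => mul_nonneg (h01 j).1 ?_)
    split_ifs <;> norm_num
  · unfold empNbhd
    rw [← Finset.mul_sum, Finset.sum_comm]
    have : ∀ j, ∑ x, ξ i j * (if X j = x then (1:ℝ) else 0) = ξ i j := fun j => by
      rw [← Finset.mul_sum]; simp
    simp_rw [this]
    have hN : (0:ℝ) < N := by
      have := i.pos
      exact_mod_cast this
    rw [inv_mul_le_iff₀ hN, mul_one]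
    calc ∑ j, ξ i j ≤ ∑ _j : Fin N, (1:ℝ) := Finset.sum_le_sum fun j _ => (h01 j).2
      _ = N := by simp

/-- Sum over configurations of a product. -/
lemma sum_prod_pi [Fintype 𝒳] {N : ℕ} (g : Fin N → 𝒳 → ℝ) :
    ∑ Y : Fin N → 𝒳, ∏ j, g j (Y j) = ∏ j, ∑ y, g j y := by
  classical
  rw [Finset.prod_univ_sum, Fintype.piFinset_univ]

lemma prodLaw_sum [Fintype 𝒳] {N : ℕ} {q : Fin N → 𝒳 → ℝ} (hq : ∀ j, q j ∈ simplex 𝒳) :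
    ∑ Y : Fin N → 𝒳, ∏ j, q j (Y j) = 1 := by
  rw [sum_prod_pi]
  exact Finset.prod_eq_one fun j _ => (hq j).2

lemma prodLaw_marg [Fintype 𝒳] {N : ℕ} {q : Fin N → 𝒳 → ℝ} (hq : ∀ j, q j ∈ simplex 𝒳)
    (i : Fin N) (h : 𝒳 → ℝ) :
    ∑ Y : Fin N → 𝒳, (∏ j, q j (Y j)) * h (Y i) = ∑ y, q i y * h y := by
  have h1 : ∀ Y : Fin N → 𝒳, (∏ j, q j (Y j)) * h (Y i)
      = ∏ j, (q j (Y j) * (if j = i then h (Y j) else 1)) := fun Y => by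
    rw [Finset.prod_mul_distrib]; simp
  simp_rw [h1]
  rw [sum_prod_pi (fun j y => q j y * (if j = i then h y else 1)),
    Finset.prod_eq_single i]
  · simp
  · intro j _ hj
    simp [hj, (hq j).2]
  · simp

lemma prodLaw_cov [Fintype 𝒳] {N : ℕ} {q : Fin N → 𝒳 → ℝ} (hq : ∀ j, q j ∈ simplex 𝒳)
    {f : Fin N → 𝒳 → ℝ} (hf : ∀ j y, |f j y| ≤ 1) (hm : ∀ j, ∑ y, q j y * f j y = 0)
    (i k : Fin N) :
    ∑ Y : Fin N → 𝒳, (∏ j, q j (Y j)) * (f i (Y i) * f k (Y k)) ≤ if i = k then 1 else 0 := by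
  split_ifs with hik
  · subst hik
    rw [← prodLaw_sum hq]
    refine Finset.sum_le_sum fun Y _ => ?_
    refine mul_le_of_le_one_right (Finset.prod_nonneg fun j _ => (hq j).1 _) ?_
    have := hf i (Y i)
    rw [← abs_mul_abs_self]
    nlinarith [abs_nonneg (f i (Y i))]
  · have h1 : ∀ Y : Fin N → 𝒳, (∏ j, q j (Y j)) * (f i (Y i) * f k (Y k))
        = ∏ j, (q j (Y j) * ((if j = i then f j (Y j) else 1) *
            (if j = k then f j (Y j) else 1))) := fun Y => by
      rw [Finset.prod_mul_distrib, Finset.prod_mul_distrib]; simp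
    simp_rw [h1]
    rw [sum_prod_pi (fun j y => q j y * ((if j = i then f j y else 1) *
            (if j = k then f j y else 1)))]
    refine le_of_eq (Finset.prod_eq_zero (Finset.mem_univ i) ?_)
    simp [hik, hm i]

/-- Concentration of weighted averages of independent variables. -/
lemma prodLaw_conc [Fintype 𝒳] {N : ℕ} {q : Fin N → 𝒳 → ℝ} (hq : ∀ j, q j ∈ simplex 𝒳)
    {f : Fin N → 𝒳 → ℝ} (hf : ∀ j y, |f j y| ≤ 1) (hm : ∀ j, ∑ y, q j y * f j y = 0)
    {κ : ℝ} (hκ : 0 < κ) (hN : 1 ≤ κ ^ 2 * N) :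
    ∑ Y : Fin N → 𝒳, (∏ j, q j (Y j)) * |(N:ℝ)⁻¹ * ∑ j, f j (Y j)| ≤ 2 * κ := by
  have hN0 : (0:ℝ) < N := by
    by_contra h
    have : (N:ℝ) ≤ 0 := not_lt.mp h
    nlinarith [sq_nonneg κ]
  have hnn : ∀ Y : Fin N → 𝒳, 0 ≤ ∏ j, q j (Y j) :=
    fun Y => Finset.prod_nonneg fun j _ => (hq j).1 _
  have hvar : ∑ Y : Fin N → 𝒳, (∏ j, q j (Y j)) * (∑ j, f j (Y j)) ^ 2 ≤ N := by
    calc ∑ Y : Fin N → 𝒳, (∏ j, q j (Y j)) * (∑ j, f j (Y j)) ^ 2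
        = ∑ i, ∑ k, ∑ Y : Fin N → 𝒳, (∏ j, q j (Y j)) * (f i (Y i) * f k (Y k)) := by
          have : ∀ Y : Fin N → 𝒳, (∏ j, q j (Y j)) * (∑ j, f j (Y j)) ^ 2
              = ∑ i, ∑ k, (∏ j, q j (Y j)) * (f i (Y i) * f k (Y k)) := fun Y => by
            rw [sq, Finset.sum_mul_sum, Finset.mul_sum]
            simp_rw [Finset.mul_sum]
          simp_rw [this]
          rw [Finset.sum_comm]
          exact Finset.sum_congr rfl fun i _ => Finset.sum_comm
      _ ≤ ∑ i : Fin N, ∑ k : Fin N, if i = k then (1:ℝ) else 0 :=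
          Finset.sum_le_sum fun i _ => Finset.sum_le_sum fun k _ => prodLaw_cov hq hf hm i k
      _ = N := by simp
  have hpt : ∀ Y : Fin N → 𝒳, |(N:ℝ)⁻¹ * ∑ j, f j (Y j)|
      ≤ κ + κ⁻¹ * ((N:ℝ)⁻¹) ^ 2 * (∑ j, f j (Y j)) ^ 2 := fun Y => by
    have h2 : κ⁻¹ * ((N:ℝ)⁻¹) ^ 2 * (∑ j, f j (Y j)) ^ 2
      = κ⁻¹ * |(N:ℝ)⁻¹ * ∑ j, f j (Y j)| ^ 2 := by rw [sq_abs]; ring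
    rw [h2]
    generalize |(N:ℝ)⁻¹ * ∑ j, f j (Y j)| = z
    rw [← sub_le_iff_le_add', le_inv_mul_iff₀ hκ]
    nlinarith [sq_nonneg (z - κ), sq_nonneg z, sq_nonneg κ]
  calc ∑ Y : Fin N → 𝒳, (∏ j, q j (Y j)) * |(N:ℝ)⁻¹ * ∑ j, f j (Y j)|
      ≤ ∑ Y : Fin N → 𝒳, (∏ j, q j (Y j)) *
        (κ + κ⁻¹ * ((N:ℝ)⁻¹) ^ 2 * (∑ j, f j (Y j)) ^ 2) :=
        Finset.sum_le_sum fun Y _ => mul_le_mul_of_nonneg_left (hpt Y) (hnn Y)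
    _ = κ + κ⁻¹ * ((N:ℝ)⁻¹) ^ 2 * ∑ Y : Fin N → 𝒳, (∏ j, q j (Y j)) * (∑ j, f j (Y j)) ^ 2 := by
        simp_rw [mul_add]
        rw [Finset.sum_add_distrib, ← Finset.sum_mul, prodLaw_sum hq, one_mul, Finset.mul_sum]
        congr 1
        exact Finset.sum_congr rfl fun Y _ => by ring
    _ ≤ κ + κ⁻¹ * ((N:ℝ)⁻¹) ^ 2 * N := by
        gcongr
    _ ≤ 2 * κ := by
        have : κ⁻¹ * ((N:ℝ)⁻¹) ^ 2 * N = κ⁻¹ * (N:ℝ)⁻¹ := by field_simp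
        rw [this]
        have : κ⁻¹ * (N:ℝ)⁻¹ ≤ κ := by
          rw [inv_mul_le_iff₀ hκ, inv_le_iff_one_le_mul₀ hN0]
          nlinarith
        linarith

section Joint
variable [Fintype 𝒳] [DecidableEq 𝒳] [Fintype 𝒰] {N : ℕ}

lemma jointLaw_simplex {P : 𝒳 → 𝒰 → (𝒳 → ℝ) → 𝒳 → ℝ} (hP : IsKernel P) {μ0 : 𝒳 → ℝ}
    (hμ0 : μ0 ∈ simplex 𝒳) {ξ : Fin N → Fin N → ℝ} (hξ : IsEdgeWeights ξ)
    {πs : Fin N → ℕ → 𝒳 → 𝒰 → ℝ} (hπs : ∀ i, IsPolicy (πs i)) (t : ℕ) :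
    jointLaw P μ0 ξ πs t ∈ simplex (Fin N → 𝒳) := by
  induction t with
  | zero => exact ⟨fun X => Finset.prod_nonneg fun i _ => hμ0.1 _, prodLaw_sum fun _ => hμ0⟩
  | succ t ih =>
    have hs : ∀ X : Fin N → 𝒳, ∀ j, stepK P (πs j) t (X j) (empNbhd ξ X j) ∈ simplex 𝒳 :=
      fun X j => stepK_simplex hP (hπs j) t _ (empNbhd_subProb hξ X j)
    constructor
    · intro Y
      exact Finset.sum_nonneg fun X _ => mul_nonneg (ih.1 X)
        (Finset.prod_nonneg fun j _ => (hs X j).1 _)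
    · change ∑ Y : Fin N → 𝒳, ∑ X : Fin N → 𝒳, jointLaw P μ0 ξ πs t X *
        ∏ j, stepK P (πs j) t (X j) (empNbhd ξ X j) (Y j) = 1
      rw [Finset.sum_comm]
      simp_rw [← Finset.mul_sum]
      rw [← ih.2]
      exact Finset.sum_congr rfl fun X _ => by rw [prodLaw_sum (hs X), mul_one]

lemma jointLaw_succ_sum (P : 𝒳 → 𝒰 → (𝒳 → ℝ) → 𝒳 → ℝ) (μ0 : 𝒳 → ℝ)
    (ξ : Fin N → Fin N → ℝ) (πs : Fin N → ℕ → 𝒳 → 𝒰 → ℝ) (t : ℕ) (f : (Fin N → 𝒳) → ℝ) :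
    ∑ Y, jointLaw P μ0 ξ πs (t+1) Y * f Y = ∑ X, jointLaw P μ0 ξ πs t X *
      ∑ Y : Fin N → 𝒳, (∏ j, stepK P (πs j) t (X j) (empNbhd ξ X j) (Y j)) * f Y := by
  change ∑ Y : Fin N → 𝒳, (∑ X : Fin N → 𝒳, jointLaw P μ0 ξ πs t X *
        ∏ j, stepK P (πs j) t (X j) (empNbhd ξ X j) (Y j)) * f Y = _
  simp_rw [Finset.sum_mul, Finset.mul_sum]
  rw [Finset.sum_comm]
  exact Finset.sum_congr rfl fun X _ => Finset.sum_congr rfl fun Y _ => by ring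

end Joint
/-- Weighted deviation of the empirical configuration from the reference marginals. -/
noncomputable def Dev [Fintype 𝒳] [DecidableEq 𝒳] {N : ℕ} (X : Fin N → 𝒳) (ν : Fin N → 𝒳 → ℝ)
    (a : Fin N → ℝ) (x : 𝒳) : ℝ :=
  (N:ℝ)⁻¹ * ∑ j, a j * ((if X j = x then 1 else 0) - ν j x)

/-- Deterministic discretization error of agent i. -/
noncomputable def detErr [Fintype 𝒳] {N : ℕ} (ξ : Fin N → Fin N → ℝ) (ν G : Fin N → 𝒳 → ℝ)
    (i : Fin N) : ℝ := ∑ x, |(N:ℝ)⁻¹ * (∑ j, ξ i j * ν j x) - G i x|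

section Propag
variable [Fintype 𝒳] [DecidableEq 𝒳] [Fintype 𝒰] {N : ℕ}

lemma emp_dist (ξ : Fin N → Fin N → ℝ) (X : Fin N → 𝒳) (ν G : Fin N → 𝒳 → ℝ) (i : Fin N) :
    l1dist (empNbhd ξ X i) (G i) ≤ ∑ x, |Dev X ν (ξ i) x| + detErr ξ ν G i := by
  unfold l1dist detErr
  rw [← Finset.sum_add_distrib]
  refine Finset.sum_le_sum fun x _ => ?_
  have : empNbhd ξ X i x - G i x
      = Dev X ν (ξ i) x + ((N:ℝ)⁻¹ * (∑ j, ξ i j * ν j x) - G i x) := by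
    unfold empNbhd Dev
    simp_rw [mul_sub]
    rw [Finset.sum_sub_distrib]
    ring
  rw [this]
  exact abs_add_le _ _

lemma dev_step {P : 𝒳 → 𝒰 → (𝒳 → ℝ) → 𝒳 → ℝ} (hP : IsKernel P) {LP : ℝ}
    (hPLip : KernelLipschitz P LP) {ξ : Fin N → Fin N → ℝ} (hξ : IsEdgeWeights ξ)
    {πs πr : Fin N → ℕ → 𝒳 → 𝒰 → ℝ} (hπs : ∀ i, IsPolicy (πs i)) (hπr : ∀ i, IsPolicy (πr i))
    (k : Fin N) (hk : ∀ j, j ≠ k → πs j = πr j)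
    {ν ν' G : Fin N → 𝒳 → ℝ} (hG : ∀ j, G j ∈ subProb 𝒳) (t : ℕ)
    (hν' : ∀ j x', ν' j x' = ∑ x, ν j x * stepK P (πr j) t x (G j) x')
    {κ : ℝ} (hκ : 0 < κ) (hN : 1 ≤ κ ^ 2 * N)
    {a : Fin N → ℝ} (ha : ∀ j, |a j| ≤ 1) (x' : 𝒳) (X : Fin N → 𝒳) :
    ∑ Y : Fin N → 𝒳, (∏ j, stepK P (πs j) t (X j) (empNbhd ξ X j) (Y j)) * |Dev Y ν' a x'|
      ≤ 2 * κ + ((N:ℝ)⁻¹ * ∑ j, |LP| * l1dist (empNbhd ξ X j) (G j) + κ ^ 2)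
        + ∑ x, |Dev X ν (fun j => a j * stepK P (πr j) t x (G j) x') x| := by
  have hN0 : (0:ℝ) < N := by exact_mod_cast k.pos
  have hs : ∀ j, stepK P (πs j) t (X j) (empNbhd ξ X j) ∈ simplex 𝒳 :=
      fun j => stepK_simplex hP (hπs j) t _ (empNbhd_subProb hξ X j)
  have hr : ∀ j x, stepK P (πr j) t x (G j) ∈ simplex 𝒳 :=
      fun j x => stepK_simplex hP (hπr j) t _ (hG j)
  set qs : Fin N → 𝒳 → ℝ := fun j => stepK P (πs j) t (X j) (empNbhd ξ X j) with hqs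
  set qr : Fin N → 𝒳 → ℝ := fun j => stepK P (πr j) t (X j) (G j) with hqr
  set f : Fin N → 𝒳 → ℝ := fun j y => a j * ((if y = x' then 1 else 0) - qs j x') with hfdef
  have hf : ∀ j y, |f j y| ≤ 1 := by
    intro j y
    rw [hfdef, abs_mul]
    refine mul_le_one₀ (ha j) (abs_nonneg _) ?_
    have h0 := (hs j).1 x'
    have h1 := simplex_le_one (hs j) x'
    rw [abs_le]
    simp only [hqs]
    split_ifs <;> constructor <;> linarith
  have hm : ∀ j, ∑ y, qs j y * f j y = 0 := by
    intro j
    have : ∀ y, qs j y * f j y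
        = a j * ((if y = x' then qs j y else 0) - qs j x' * qs j y) := fun y => by
      simp only [hfdef]
      split_ifs <;> ring
    simp_rw [this]
    rw [← Finset.mul_sum, Finset.sum_sub_distrib, ← Finset.mul_sum, (hs j).2]
    simp
  have hconc := prodLaw_conc hs hf hm hκ hN
  -- decomposition
  have hdec : ∀ Y : Fin N → 𝒳, |Dev Y ν' a x'| ≤ |(N:ℝ)⁻¹ * ∑ j, f j (Y j)|
      + (|(N:ℝ)⁻¹ * ∑ j, a j * (qs j x' - qr j x')|
        + |(N:ℝ)⁻¹ * ∑ j, a j * (qr j x' - ν' j x')|) := fun Y => by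
    have : Dev Y ν' a x' = (N:ℝ)⁻¹ * ∑ j, f j (Y j)
      + ((N:ℝ)⁻¹ * ∑ j, a j * (qs j x' - qr j x')
        + (N:ℝ)⁻¹ * ∑ j, a j * (qr j x' - ν' j x')) := by
      unfold Dev
      rw [← mul_add, ← mul_add, ← Finset.sum_add_distrib, ← Finset.sum_add_distrib]
      congr 1
      exact Finset.sum_congr rfl fun j _ => by simp only [hfdef]; ring
    rw [this]
    exact (abs_add_le _ _).trans (add_le_add le_rfl (abs_add_le _ _))
  have hB : |(N:ℝ)⁻¹ * ∑ j, a j * (qs j x' - qr j x')|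
      ≤ (N:ℝ)⁻¹ * ∑ j, |LP| * l1dist (empNbhd ξ X j) (G j) + κ ^ 2 := by
    rw [abs_mul, abs_of_pos (inv_pos.mpr hN0)]
    have : |∑ j, a j * (qs j x' - qr j x')|
        ≤ ∑ j, (|LP| * l1dist (empNbhd ξ X j) (G j) + if j = k then 1 else 0) := by
      refine (Finset.abs_sum_le_sum_abs _ _).trans (Finset.sum_le_sum fun j _ => ?_)
      rw [abs_mul]
      refine (mul_le_of_le_one_left (abs_nonneg _) (ha j)).trans ?_
      by_cases hj : j = k
      · rw [if_pos hj]
        have h0 := (hs j).1 x'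
        have h1 := simplex_le_one (hs j) x'
        have h2 := (hr j (X j)).1 x'
        have h3 := simplex_le_one (hr j (X j)) x'
        have h4 : 0 ≤ |LP| * l1dist (empNbhd ξ X j) (G j) :=
          mul_nonneg (abs_nonneg _) (l1dist_nonneg _ _)
        rw [abs_le]
        constructor <;> simp only [hqs, hqr] <;> linarith
      · rw [if_neg hj, add_zero]
        have := stepK_lip hPLip (hπs j) t (X j) (empNbhd_subProb hξ X j) (hG j)
        refine le_trans ?_ this
        simp only [hqs, hqr]
        rw [← hk j hj]
        exact Finset.single_le_sum
          (f := fun y => |stepK P (πs j) t (X j) (empNbhd ξ X j) y - stepK P (πs j) t (X j) (G j) y|)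
          (fun y _ => abs_nonneg _) (Finset.mem_univ x')
    refine (mul_le_mul_of_nonneg_left this (inv_nonneg.mpr hN0.le)).trans ?_
    rw [Finset.sum_add_distrib, mul_add]
    refine add_le_add le_rfl ?_
    simp only [Finset.sum_ite_eq', Finset.mem_univ, if_true, mul_one]
    rw [inv_le_iff_one_le_mul₀ hN0]
    exact hN
  have hC : |(N:ℝ)⁻¹ * ∑ j, a j * (qr j x' - ν' j x')|
      ≤ ∑ x, |Dev X ν (fun j => a j * stepK P (πr j) t x (G j) x') x| := by
    have : (N:ℝ)⁻¹ * ∑ j, a j * (qr j x' - ν' j x')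
        = ∑ x, Dev X ν (fun j => a j * stepK P (πr j) t x (G j) x') x := by
      unfold Dev
      rw [← Finset.mul_sum, Finset.sum_comm]
      congr 1
      refine Finset.sum_congr rfl fun j _ => ?_
      rw [hν']
      simp_rw [mul_assoc]
      rw [← Finset.mul_sum]
      congr 1
      simp_rw [mul_sub]
      rw [Finset.sum_sub_distrib]
      congr 1
      · simp [hqr]
      · exact Finset.sum_congr rfl fun x _ => mul_comm _ _
    rw [this]
    exact Finset.abs_sum_le_sum_abs _ _
  calc ∑ Y : Fin N → 𝒳, (∏ j, qs j (Y j)) * |Dev Y ν' a x'|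
      ≤ ∑ Y : Fin N → 𝒳, (∏ j, qs j (Y j)) * (|(N:ℝ)⁻¹ * ∑ j, f j (Y j)|
      + (|(N:ℝ)⁻¹ * ∑ j, a j * (qs j x' - qr j x')|
        + |(N:ℝ)⁻¹ * ∑ j, a j * (qr j x' - ν' j x')|)) :=
        Finset.sum_le_sum fun Y _ => mul_le_mul_of_nonneg_left (hdec Y)
          (Finset.prod_nonneg fun j _ => (hs j).1 _)
    _ = ∑ Y : Fin N → 𝒳, (∏ j, qs j (Y j)) * |(N:ℝ)⁻¹ * ∑ j, f j (Y j)|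
      + (|(N:ℝ)⁻¹ * ∑ j, a j * (qs j x' - qr j x')|
        + |(N:ℝ)⁻¹ * ∑ j, a j * (qr j x' - ν' j x')|) := by
        simp_rw [mul_add (∏ j, qs j _)]
        rw [Finset.sum_add_distrib, Finset.sum_add_distrib, ← Finset.sum_mul, ← Finset.sum_mul,
          prodLaw_sum hs, one_mul, one_mul]
    _ ≤ _ := by linarith

lemma emp_dist_exp {p : (Fin N → 𝒳) → ℝ} (hp : p ∈ simplex (Fin N → 𝒳))
    {ξ : Fin N → Fin N → ℝ} (hξ : IsEdgeWeights ξ) {ν G : Fin N → 𝒳 → ℝ} {e : ℝ}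
    (he : ∀ a : Fin N → ℝ, (∀ j, |a j| ≤ 1) → ∀ x, ∑ X, p X * |Dev X ν a x| ≤ e) (i : Fin N) :
    ∑ X, p X * l1dist (empNbhd ξ X i) (G i) ≤ Fintype.card 𝒳 * e + detErr ξ ν G i := by
  have ha : ∀ j, |ξ i j| ≤ 1 := fun j => by
    rcases hξ.1 i j with h | h <;> rw [h] <;> norm_num
  calc ∑ X, p X * l1dist (empNbhd ξ X i) (G i)
      ≤ ∑ X, p X * (∑ x, |Dev X ν (ξ i) x| + detErr ξ ν G i) :=
        Finset.sum_le_sum fun X _ => mul_le_mul_of_nonneg_left (emp_dist ξ X ν G i) (hp.1 X)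
    _ = ∑ x, ∑ X, p X * |Dev X ν (ξ i) x| + detErr ξ ν G i := by
        simp_rw [mul_add]
        rw [Finset.sum_add_distrib, ← Finset.sum_mul, hp.2, one_mul, Finset.sum_comm]
        simp_rw [Finset.mul_sum]
    _ ≤ ∑ _x : 𝒳, e + detErr ξ ν G i := by
        gcongr with x
        exact he _ ha x
    _ = _ := by simp

/-- Error recursion constants. -/
noncomputable def errK (c LP : ℝ) : ℕ → ℝ
  | 0 => 2
  | (t+1) => 2 + (|LP| * (c * errK c LP t + 1) + 1) + c * errK c LP t

lemma errK_nonneg {c LP : ℝ} (hc : 0 ≤ c) (t : ℕ) : 0 ≤ errK c LP t := by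
  induction t with
  | zero => simp [errK]
  | succ t ih => simp only [errK]; positivity

lemma dev_bound {P : 𝒳 → 𝒰 → (𝒳 → ℝ) → 𝒳 → ℝ} (hP : IsKernel P) {LP : ℝ}
    (hPLip : KernelLipschitz P LP) {μ0 : 𝒳 → ℝ} (hμ0 : μ0 ∈ simplex 𝒳)
    {ξ : Fin N → Fin N → ℝ} (hξ : IsEdgeWeights ξ)
    {πs πr : Fin N → ℕ → 𝒳 → 𝒰 → ℝ} (hπs : ∀ i, IsPolicy (πs i)) (hπr : ∀ i, IsPolicy (πr i))
    (k : Fin N) (hk : ∀ j, j ≠ k → πs j = πr j)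
    {ν G : ℕ → Fin N → 𝒳 → ℝ} (hG : ∀ t j, G t j ∈ subProb 𝒳)
    (hν0 : ∀ j, ν 0 j = μ0)
    (hν : ∀ t j x', ν (t+1) j x' = ∑ x, ν t j x * stepK P (πr j) t x (G t j) x')
    {κ : ℝ} (hκ : 0 < κ) (hκ1 : κ ≤ 1) (hN : 1 ≤ κ ^ 2 * N) (T : ℕ)
    (hdet : ∀ t < T, (N:ℝ)⁻¹ * ∑ j, detErr ξ (ν t) (G t) j ≤ κ) :
    ∀ t ≤ T, ∀ a : Fin N → ℝ, (∀ j, |a j| ≤ 1) → ∀ x,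
      ∑ X, jointLaw P μ0 ξ πs t X * |Dev X (ν t) a x| ≤ errK (Fintype.card 𝒳) LP t * κ := by
  have hN0 : (0:ℝ) < N := by exact_mod_cast k.pos
  intro t
  induction t with
  | zero =>
    intro _ a ha x
    have h0 := hμ0.1 x
    have h1 := simplex_le_one hμ0 x
    have := prodLaw_conc (N := N) (q := fun _ => μ0) (fun _ => hμ0)
      (f := fun j y => a j * ((if y = x then 1 else 0) - μ0 x)) (fun j y => by
        rw [abs_mul]
        refine mul_le_one₀ (ha j) (abs_nonneg _) ?_
        rw [abs_le]
        split_ifs <;> constructor <;> linarith) (fun j => by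
        have : ∀ y, μ0 y * (a j * ((if y = x then 1 else 0) - μ0 x))
            = a j * ((if y = x then μ0 y else 0) - μ0 x * μ0 y) := fun y => by
          split_ifs <;> ring
        simp_rw [this]
        rw [← Finset.mul_sum, Finset.sum_sub_distrib, ← Finset.mul_sum, hμ0.2]
        simp) hκ hN
    simp only [errK, Dev, hν0, jointLaw]
    exact this
  | succ t ih =>
    intro ht a ha x'
    have ih := ih (by omega)
    have hJ := jointLaw_simplex hP hμ0 hξ hπs t
    set c : ℝ := ((Fintype.card 𝒳 : ℕ) : ℝ) with hc
    set e := errK c LP t * κ with he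
    rw [jointLaw_succ_sum]
    calc _ ≤ ∑ X, jointLaw P μ0 ξ πs t X * (2 * κ +
          ((N:ℝ)⁻¹ * ∑ j, |LP| * l1dist (empNbhd ξ X j) (G t j) + κ ^ 2)
        + ∑ x, |Dev X (ν t) (fun j => a j * stepK P (πr j) t x (G t j) x') x|) :=
          Finset.sum_le_sum fun X _ => mul_le_mul_of_nonneg_left
            (dev_step hP hPLip hξ hπs hπr k hk (hG t) t (hν t) hκ hN ha x' X) (hJ.1 X)
      _ = 2 * κ + ((N:ℝ)⁻¹ * ∑ j, |LP| *
            (∑ X, jointLaw P μ0 ξ πs t X * l1dist (empNbhd ξ X j) (G t j)) + κ ^ 2)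
          + ∑ x, ∑ X, jointLaw P μ0 ξ πs t X *
              |Dev X (ν t) (fun j => a j * stepK P (πr j) t x (G t j) x') x| := by
          simp_rw [mul_add, Finset.sum_add_distrib, ← Finset.sum_mul, hJ.2, one_mul]
          congr 1
          · congr 2
            simp_rw [Finset.mul_sum]
            rw [Finset.sum_comm]
            exact Finset.sum_congr rfl fun j _ => Finset.sum_congr rfl fun X _ => by ring
          · simp_rw [Finset.mul_sum]
            rw [Finset.sum_comm]
      _ ≤ 2 * κ + ((N:ℝ)⁻¹ * ∑ j, |LP| * (c * e + detErr ξ (ν t) (G t) j) + κ ^ 2)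
          + ∑ _x : 𝒳, e := by
          gcongr with j _ x _
          · exact emp_dist_exp hJ hξ ih j
          · refine ih _ (fun j => ?_) x
            have hr := stepK_simplex hP (hπr j) t x (hG t j)
            rw [abs_mul, abs_of_nonneg (hr.1 x')]
            exact mul_le_one₀ (ha j) (hr.1 x') (simplex_le_one hr x')
      _ = 2 * κ + (|LP| * (c * e + (N:ℝ)⁻¹ * ∑ j, detErr ξ (ν t) (G t) j) + κ ^ 2) + c * e := by
          rw [← Finset.mul_sum, Finset.sum_add_distrib]
          simp only [Finset.sum_const, Finset.card_univ, Fintype.card_fin, nsmul_eq_mul, ← hc]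
          field_simp
      _ ≤ 2 * κ + (|LP| * (c * e + κ) + κ) + c * e := by
          have h1 := hdet t (by omega)
          have h2 : κ ^ 2 ≤ κ := by nlinarith
          gcongr
      _ = errK c LP (t+1) * κ := by
          simp only [errK, he]; ring

lemma marg_bound {P : 𝒳 → 𝒰 → (𝒳 → ℝ) → 𝒳 → ℝ} (hP : IsKernel P) {LP : ℝ}
    (hPLip : KernelLipschitz P LP) {μ0 : 𝒳 → ℝ} (hμ0 : μ0 ∈ simplex 𝒳)
    {ξ : Fin N → Fin N → ℝ} (hξ : IsEdgeWeights ξ)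
    {πs : Fin N → ℕ → 𝒳 → 𝒰 → ℝ} (hπs : ∀ i, IsPolicy (πs i)) (i : Fin N)
    {G : ℕ → 𝒳 → ℝ} (hG : ∀ t, G t ∈ subProb 𝒳) {b : ℝ} (T : ℕ)
    (hb : ∀ t < T, ∑ X, jointLaw P μ0 ξ πs t X * l1dist (empNbhd ξ X i) (G t) ≤ b) :
    ∀ t ≤ T, ∀ (M : ℝ) (h : 𝒳 → ℝ), 0 ≤ M → (∀ x, |h x| ≤ M) →
      |∑ X, jointLaw P μ0 ξ πs t X * h (X i) - ∑ x, stateLaw P μ0 G (πs i) t x * h x|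
        ≤ M * (t * (|LP| * b)) := by
  intro t
  induction t with
  | zero =>
    intro _ M h hM hh
    have := prodLaw_marg (N := N) (q := fun _ => μ0) (fun _ => hμ0) i h
    simp only [jointLaw, stateLaw]
    rw [this]; simp
  | succ t ih =>
    intro ht M h hM hh
    have hJ := jointLaw_simplex hP hμ0 hξ hπs t
    rw [jointLaw_succ_sum]
    have hs : ∀ X : Fin N → 𝒳, ∀ j, stepK P (πs j) t (X j) (empNbhd ξ X j) ∈ simplex 𝒳 :=
      fun X j => stepK_simplex hP (hπs j) t _ (empNbhd_subProb hξ X j)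
    simp_rw [fun X => prodLaw_marg (hs X) i h]
    set h' : 𝒳 → ℝ := fun x => ∑ y, stepK P (πs i) t x (G t) y * h y with hh'
    have hb' : ∀ x, |h' x| ≤ M := fun x => by
      have hq := stepK_simplex hP (hπs i) t x (hG t)
      calc |h' x| ≤ ∑ y, |stepK P (πs i) t x (G t) y * h y| := Finset.abs_sum_le_sum_abs _ _
        _ ≤ ∑ y, stepK P (πs i) t x (G t) y * M := Finset.sum_le_sum fun y _ => by
          rw [abs_mul, abs_of_nonneg (hq.1 y)]
          exact mul_le_mul_of_nonneg_left (hh y) (hq.1 y)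
        _ = M := by rw [← Finset.sum_mul, hq.2, one_mul]
    have hst : ∑ x, stateLaw P μ0 G (πs i) (t+1) x * h x
        = ∑ x, stateLaw P μ0 G (πs i) t x * h' x := by
      change ∑ y, (∑ x, stateLaw P μ0 G (πs i) t x * stepK P (πs i) t x (G t) y) * h y = _
      simp_rw [hh', Finset.sum_mul, Finset.mul_sum]
      rw [Finset.sum_comm]
      exact Finset.sum_congr rfl fun X _ => Finset.sum_congr rfl fun Y _ => by ring
    rw [hst]
    have h1 := ih (by omega) M h' hM hb'
    have h2 : |∑ X, jointLaw P μ0 ξ πs t X * ∑ y, stepK P (πs i) t (X i) (empNbhd ξ X i) y * h y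
        - ∑ X, jointLaw P μ0 ξ πs t X * h' (X i)| ≤ M * (|LP| * b) := by
      rw [← Finset.sum_sub_distrib]
      calc _ ≤ ∑ X, jointLaw P μ0 ξ πs t X *
            (M * (|LP| * l1dist (empNbhd ξ X i) (G t))) := by
            refine (Finset.abs_sum_le_sum_abs _ _).trans (Finset.sum_le_sum fun X _ => ?_)
            rw [← mul_sub, abs_mul, abs_of_nonneg (hJ.1 X)]
            refine mul_le_mul_of_nonneg_left ?_ (hJ.1 X)
            simp only [hh']
            rw [← Finset.sum_sub_distrib]
            calc _ ≤ ∑ y, M * |stepK P (πs i) t (X i) (empNbhd ξ X i) y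
                    - stepK P (πs i) t (X i) (G t) y| := by
                  refine (Finset.abs_sum_le_sum_abs _ _).trans (Finset.sum_le_sum fun y _ => ?_)
                  rw [← sub_mul, abs_mul, mul_comm]
                  exact mul_le_mul_of_nonneg_right (hh y) (abs_nonneg _)
              _ ≤ _ := by
                  rw [← Finset.mul_sum]
                  exact mul_le_mul_of_nonneg_left
                    (stepK_lip hPLip (hπs i) t (X i) (empNbhd_subProb hξ X i) (hG t)) hM
        _ = M * (|LP| * ∑ X, jointLaw P μ0 ξ πs t X * l1dist (empNbhd ξ X i) (G t)) := by
            simp_rw [Finset.mul_sum]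
            exact Finset.sum_congr rfl fun X _ => by ring
        _ ≤ _ := by
            have := hb t (by omega)
            gcongr
    refine (abs_sub_le _ _ _).trans ((add_le_add h2 h1).trans (le_of_eq ?_))
    push_cast
    ring

lemma obj_bound {P : 𝒳 → 𝒰 → (𝒳 → ℝ) → 𝒳 → ℝ} (hP : IsKernel P) {LP : ℝ}
    (hPLip : KernelLipschitz P LP) {r : 𝒳 → 𝒰 → (𝒳 → ℝ) → ℝ} {Lr : ℝ}
    (hrLip : RewardLipschitz r Lr) {M : ℝ} (hM : 0 ≤ M)
    (hr : ∀ x u g, g ∈ subProb 𝒳 → |r x u g| ≤ M)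
    {μ0 : 𝒳 → ℝ} (hμ0 : μ0 ∈ simplex 𝒳)
    {ξ : Fin N → Fin N → ℝ} (hξ : IsEdgeWeights ξ)
    {πs : Fin N → ℕ → 𝒳 → 𝒰 → ℝ} (hπs : ∀ i, IsPolicy (πs i)) (i : Fin N)
    {G : ℕ → 𝒳 → ℝ} (hG : ∀ t, G t ∈ subProb 𝒳) {b : ℝ} (hb0 : 0 ≤ b) (T : ℕ)
    (hb : ∀ t < T, ∑ X, jointLaw P μ0 ξ πs t X * l1dist (empNbhd ξ X i) (G t) ≤ b) :
    |JN T r P μ0 ξ πs i - Jmf T r P μ0 G (πs i)| ≤ T * (|Lr| + M * (T * |LP|)) * b := by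
  unfold JN Jmf
  rw [← Finset.sum_sub_distrib]
  calc _ ≤ ∑ t ∈ Finset.range T, (|Lr| + M * (T * |LP|)) * b := by
        refine (Finset.abs_sum_le_sum_abs _ _).trans (Finset.sum_le_sum fun t ht => ?_)
        have htT : t < T := Finset.mem_range.mp ht
        have hJ := jointLaw_simplex hP hμ0 hξ hπs t
        have h1 := marg_bound hP hPLip hμ0 hξ hπs i hG T hb t htT.le M
          (fun x => ∑ u, πs i t x u * r x u (G t)) hM
          (fun x => policy_avg_abs (hπs i) t x fun u => hr x u _ (hG t))
        have h2 : |∑ X, jointLaw P μ0 ξ πs t X * ∑ u, πs i t (X i) u * r (X i) u (empNbhd ξ X i)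
            - ∑ X, jointLaw P μ0 ξ πs t X * ∑ u, πs i t (X i) u * r (X i) u (G t)|
            ≤ |Lr| * b := by
          rw [← Finset.sum_sub_distrib]
          calc _ ≤ ∑ X, jointLaw P μ0 ξ πs t X * (|Lr| * l1dist (empNbhd ξ X i) (G t)) := by
                refine (Finset.abs_sum_le_sum_abs _ _).trans (Finset.sum_le_sum fun X _ => ?_)
                rw [← mul_sub, abs_mul, abs_of_nonneg (hJ.1 X), ← Finset.sum_sub_distrib]
                simp_rw [← mul_sub]
                refine mul_le_mul_of_nonneg_left (policy_avg_abs (hπs i) t (X i) fun u => ?_)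
                  (hJ.1 X)
                exact (hrLip _ _ _ _ (empNbhd_subProb hξ X i) (hG t)).trans
                  (mul_le_mul_of_nonneg_right (le_abs_self _) (l1dist_nonneg _ _))
            _ = |Lr| * ∑ X, jointLaw P μ0 ξ πs t X * l1dist (empNbhd ξ X i) (G t) := by
                simp_rw [Finset.mul_sum]
                exact Finset.sum_congr rfl fun X _ => by ring
            _ ≤ _ := mul_le_mul_of_nonneg_left (hb t htT) (abs_nonneg _)
        refine (abs_sub_le _ _ _).trans ((add_le_add h2 h1).trans ?_)
        have : (t:ℝ) ≤ T := by exact_mod_cast htT.le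
        calc |Lr| * b + M * (t * (|LP| * b)) ≤ |Lr| * b + M * (T * (|LP| * b)) := by gcongr
          _ = _ := by ring
    _ = _ := by simp; ring

end Propag
lemma integrableOn_bdd {f : ℝ → ℝ} (hf : Measurable f) (C : ℝ)
    (h : ∀ β ∈ Set.Ioc (0:ℝ) 1, |f β| ≤ C) : IntegrableOn f (Set.Ioc (0:ℝ) 1) := by
  refine Measure.integrableOn_of_bounded (M := C) (by simp) hf.aestronglyMeasurable ?_
  filter_upwards [self_mem_ae_restrict measurableSet_Ioc] with β hβ
  exact h β hβ

lemma setIntegral_le_const {f : ℝ → ℝ} (hf : IntegrableOn f (Set.Ioc (0:ℝ) 1)) (C : ℝ)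
    (h : ∀ β ∈ Set.Ioc (0:ℝ) 1, f β ≤ C) : ∫ β in Set.Ioc (0:ℝ) 1, f β ≤ C := by
  calc ∫ β in Set.Ioc (0:ℝ) 1, f β ≤ ∫ _β in Set.Ioc (0:ℝ) 1, C :=
        setIntegral_mono_on hf (by simp) measurableSet_Ioc h
    _ = C := by simp

lemma graphon_slice {W : ℝ → ℝ → ℝ} (hW : IsGraphon W) (α : ℝ) : Measurable (W α) :=
  hW.1.comp measurable_prodMk_left

section MF
variable [Fintype 𝒳] [Fintype 𝒰]

lemma nbhd_integrable {W : ℝ → ℝ → ℝ} (hW : IsGraphon W) {ν : ℝ → 𝒳 → ℝ}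
    (hm : ∀ x, Measurable fun α => ν α x) (hν : ∀ β ∈ Set.Icc (0:ℝ) 1, ν β ∈ simplex 𝒳)
    (α : ℝ) (x : 𝒳) : IntegrableOn (fun β => W α β * ν β x) (Set.Ioc (0:ℝ) 1) := by
  refine integrableOn_bdd ((graphon_slice hW α).mul (hm x)) 1 fun β hβ => ?_
  have h := hν β (Set.Ioc_subset_Icc_self hβ)
  have h1 := simplex_le_one h x
  have h2 := hW.2.2 α β
  rw [abs_of_nonneg (mul_nonneg h2.1 (h.1 x))]
  exact mul_le_one₀ h2.2 (h.1 x) h1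

lemma nbhd_subProb {W : ℝ → ℝ → ℝ} (hW : IsGraphon W) {ν : ℝ → 𝒳 → ℝ}
    (hm : ∀ x, Measurable fun α => ν α x) (hν : ∀ β ∈ Set.Icc (0:ℝ) 1, ν β ∈ simplex 𝒳)
    (α : ℝ) : nbhd W ν α ∈ subProb 𝒳 := by
  constructor
  · intro x
    refine setIntegral_nonneg measurableSet_Ioc fun β hβ => ?_
    exact mul_nonneg (hW.2.2 α β).1 ((hν β (Set.Ioc_subset_Icc_self hβ)).1 x)
  · unfold nbhd
    rw [← integral_finsetSum _ fun x _ => nbhd_integrable hW hm hν α x]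
    refine setIntegral_le_const
      (integrable_finsetSum _ fun x _ => nbhd_integrable hW hm hν α x) 1 fun β hβ => ?_
    rw [← Finset.mul_sum, (hν β (Set.Ioc_subset_Icc_self hβ)).2, mul_one]
    exact (hW.2.2 α β).2

lemma mf_simplex {W : ℝ → ℝ → ℝ} (hW : IsGraphon W) {P : 𝒳 → 𝒰 → (𝒳 → ℝ) → 𝒳 → ℝ}
    (hP : IsKernel P) {μ0 : 𝒳 → ℝ} (hμ0 : μ0 ∈ simplex 𝒳) {πe : ℝ → ℕ → 𝒳 → 𝒰 → ℝ}
    (hπ : ∀ α ∈ Set.Icc (0:ℝ) 1, IsPolicy (πe α)) {μ : ℕ → ℝ → 𝒳 → ℝ}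
    (hμ : IsMeanFieldOf W P μ0 πe μ) (t : ℕ) :
    ∀ α ∈ Set.Icc (0:ℝ) 1, μ t α ∈ simplex 𝒳 := by
  induction t with
  | zero => intro α hα; rw [hμ.2.1 α hα]; exact hμ0
  | succ t ih =>
    intro α hα
    have hs : ∀ x, stepK P (πe α) t x (nbhd W (μ t) α) ∈ simplex 𝒳 := fun x =>
      stepK_simplex hP (hπ α hα) t x (nbhd_subProb hW (hμ.1 t) ih α)
    have he : ∀ x', μ (t+1) α x' = ∑ x, μ t α x * stepK P (πe α) t x (nbhd W (μ t) α) x' :=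
      hμ.2.2 t α hα
    constructor
    · intro x'
      rw [he]
      exact Finset.sum_nonneg fun x _ => mul_nonneg ((ih α hα).1 x) ((hs x).1 x')
    · simp_rw [he]
      rw [Finset.sum_comm]
      simp_rw [← Finset.mul_sum, (hs _).2, mul_one]
      exact (ih α hα).2

lemma nbhd_lip {W : ℝ → ℝ → ℝ} (hW : IsGraphon W) {LW : ℝ} (hWLip : GraphonLipschitz W LW)
    {ν : ℝ → 𝒳 → ℝ}
    (hm : ∀ x, Measurable fun α => ν α x) (hν : ∀ β ∈ Set.Icc (0:ℝ) 1, ν β ∈ simplex 𝒳)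
    {α α' : ℝ} (hα : α ∈ Set.Icc (0:ℝ) 1) (hα' : α' ∈ Set.Icc (0:ℝ) 1) (x : 𝒳) :
    |nbhd W ν α x - nbhd W ν α' x| ≤ |LW| * |α - α'| := by
  unfold nbhd
  rw [← integral_sub (nbhd_integrable hW hm hν α x) (nbhd_integrable hW hm hν α' x)]
  refine abs_integral_le_integral_abs.trans (setIntegral_le_const ?_ _ fun β hβ => ?_)
  · exact ((nbhd_integrable hW hm hν α x).sub (nbhd_integrable hW hm hν α' x)).abs
  · have hβ' := Set.Ioc_subset_Icc_self hβ
    have h := hν β hβ'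
    rw [← sub_mul, abs_mul, abs_of_nonneg (h.1 x)]
    refine (mul_le_of_le_one_right (abs_nonneg _) (simplex_le_one h x)).trans ?_
    refine (hWLip α β α' β hα hβ' hα' hβ').trans ?_
    rw [sub_self, abs_zero, add_zero]
    exact mul_le_mul_of_nonneg_right (le_abs_self _) (abs_nonneg _)

lemma nbhd_cont {W : ℝ → ℝ → ℝ} (hW : IsGraphon W) {LW : ℝ} (hWLip : GraphonLipschitz W LW)
    {ν : ℝ → 𝒳 → ℝ}
    (hm : ∀ x, Measurable fun α => ν α x) (hν : ∀ β ∈ Set.Icc (0:ℝ) 1, ν β ∈ simplex 𝒳)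
    {β : ℝ} (hβ : β ∈ Set.Icc (0:ℝ) 1) (x : 𝒳) :
    ContinuousWithinAt (fun α => nbhd W ν α x) (Set.Icc 0 1) β := by
  unfold ContinuousWithinAt
  rw [tendsto_iff_dist_tendsto_zero]
  refine squeeze_zero' (g := fun α => |LW| * |α - β|) (Eventually.of_forall fun _ => dist_nonneg)
    ?_ ?_
  · filter_upwards [self_mem_nhdsWithin] with α hα
    exact nbhd_lip hW hWLip hm hν hα hβ x
  · have : Continuous fun α : ℝ => |LW| * |α - β| := by fun_prop
    have h := (this.tendsto β).mono_left (nhdsWithin_le_nhds (s := Set.Icc (0:ℝ) 1))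
    simpa using h

lemma kernel_cont {W : ℝ → ℝ → ℝ} (hW : IsGraphon W) {LW : ℝ} (hWLip : GraphonLipschitz W LW)
    {P : 𝒳 → 𝒰 → (𝒳 → ℝ) → 𝒳 → ℝ} {LP : ℝ} (hPLip : KernelLipschitz P LP)
    {ν : ℝ → 𝒳 → ℝ}
    (hm : ∀ x, Measurable fun α => ν α x) (hν : ∀ β ∈ Set.Icc (0:ℝ) 1, ν β ∈ simplex 𝒳)
    {β : ℝ} (hβ : β ∈ Set.Icc (0:ℝ) 1) (x : 𝒳) (u : 𝒰) (x' : 𝒳) :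
    ContinuousWithinAt (fun α => P x u (nbhd W ν α) x') (Set.Icc 0 1) β := by
  have hc := fun y => nbhd_cont hW hWLip hm hν hβ y
  unfold ContinuousWithinAt
  rw [tendsto_iff_dist_tendsto_zero]
  refine squeeze_zero' (g := fun α => LP * l1dist (nbhd W ν α) (nbhd W ν β))
    (Eventually.of_forall fun _ => dist_nonneg) ?_ ?_
  · filter_upwards with α
    refine le_trans ?_ (hPLip x u _ _ (nbhd_subProb hW hm hν α) (nbhd_subProb hW hm hν β))
    exact Finset.single_le_sum (f := fun y => |P x u (nbhd W ν α) y - P x u (nbhd W ν β) y|)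
          (fun y _ => abs_nonneg _) (Finset.mem_univ x')
  · have : Tendsto (fun α => LP * ∑ y, |nbhd W ν α y - nbhd W ν β y|)
        (nhdsWithin β (Set.Icc 0 1)) (nhds (LP * ∑ y, |nbhd W ν β y - nbhd W ν β y|)) :=
      (tendsto_finsetSum _ fun y _ => ((hc y).tendsto.sub tendsto_const_nhds).abs).const_mul LP
    simpa [l1dist] using this

lemma policy_cont {πe : ℝ → ℕ → 𝒳 → 𝒰 → ℝ} {L : ℝ} {D : Finset ℝ}
    (h : ∀ (t : ℕ) (x : 𝒳) (u : 𝒰),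
    ∀ α ∈ Set.Icc (0:ℝ) 1, ∀ β ∈ Set.Icc (0:ℝ) 1,
      (∀ d ∈ D, d ∉ Set.uIcc α β) → |πe α t x u - πe β t x u| ≤ L * |α - β|)
    {β : ℝ} (hβ : β ∈ Set.Icc (0:ℝ) 1) (hβD : β ∉ D) (t : ℕ) (x : 𝒳) (u : 𝒰) :
    ContinuousWithinAt (fun α => πe α t x u) (Set.Icc 0 1) β := by
  have hev : ∀ᶠ α in nhds β, ∀ d ∈ D, d ∉ Set.uIcc α β := by
    rw [Finset.eventually_all]
    intro d hd
    have hne : d ≠ β := fun h => hβD (h ▸ hd)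
    have hpos : 0 < |d - β| := abs_pos.mpr (sub_ne_zero.mpr hne)
    filter_upwards [Metric.ball_mem_nhds β hpos] with α hα hmem
    rw [Metric.mem_ball, Real.dist_eq] at hα
    have := Set.abs_sub_right_of_mem_uIcc hmem
    rw [abs_sub_comm β d, abs_sub_comm β α] at this
    linarith
  unfold ContinuousWithinAt
  rw [tendsto_iff_dist_tendsto_zero]
  refine squeeze_zero' (g := fun α => L * |α - β|) (Eventually.of_forall fun _ => dist_nonneg)
    ?_ ?_
  · filter_upwards [self_mem_nhdsWithin, nhdsWithin_le_nhds hev] with α hα hα2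
    exact h t x u α hα β hβ hα2
  · have : Continuous fun α : ℝ => L * |α - β| := by fun_prop
    have h := (this.tendsto β).mono_left (nhdsWithin_le_nhds (s := Set.Icc (0:ℝ) 1))
    simpa using h

lemma mf_cont {W : ℝ → ℝ → ℝ} (hW : IsGraphon W) {LW : ℝ} (hWLip : GraphonLipschitz W LW)
    {P : 𝒳 → 𝒰 → (𝒳 → ℝ) → 𝒳 → ℝ}
    (hP : IsKernel P) {LP : ℝ} (hPLip : KernelLipschitz P LP)
    {μ0 : 𝒳 → ℝ} (hμ0 : μ0 ∈ simplex 𝒳) {πe : ℝ → ℕ → 𝒳 → 𝒰 → ℝ}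
    (hπ : ∀ α ∈ Set.Icc (0:ℝ) 1, IsPolicy (πe α)) {μ : ℕ → ℝ → 𝒳 → ℝ}
    (hμ : IsMeanFieldOf W P μ0 πe μ) {L : ℝ} {D : Finset ℝ}
    (h : ∀ (t : ℕ) (x : 𝒳) (u : 𝒰),
    ∀ α ∈ Set.Icc (0:ℝ) 1, ∀ β ∈ Set.Icc (0:ℝ) 1,
      (∀ d ∈ D, d ∉ Set.uIcc α β) → |πe α t x u - πe β t x u| ≤ L * |α - β|)
    {β : ℝ} (hβ : β ∈ Set.Icc (0:ℝ) 1) (hβD : β ∉ D) (t : ℕ) (x : 𝒳) :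
    ContinuousWithinAt (fun α => μ t α x) (Set.Icc 0 1) β := by
  induction t generalizing x with
  | zero =>
    refine (continuousWithinAt_const (b := μ0 x)).congr (fun α hα => ?_) ?_
    · rw [hμ.2.1 α hα]
    · rw [hμ.2.1 β hβ]
  | succ t ih =>
    have hs := mf_simplex hW hP hμ0 hπ hμ t
    have : ContinuousWithinAt (fun α => ∑ y, μ t α y * ∑ u, πe α t y u *
        P y u (nbhd W (μ t) α) x) (Set.Icc 0 1) β := by
      refine tendsto_finsetSum _ fun y _ => (ih y).tendsto.mul ?_
      refine tendsto_finsetSum _ fun u _ => ?_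
      exact (policy_cont h hβ hβD t y u).tendsto.mul
        (kernel_cont hW hWLip hPLip (hμ.1 t) hs hβ y u x).tendsto
    exact this.congr (fun α hα => hμ.2.2 t α hα x) (hμ.2.2 t β hβ x)

end MF

/-- Cell indicator. -/
noncomputable def cellI (N : ℕ) (j : Fin N) (b : ℝ) : ℝ :=
  if ((j : ℕ) : ℝ) / N < b ∧ b ≤ (((j : ℕ) : ℝ) + 1) / N then 1 else 0

lemma cell_unique {N : ℕ} {j k : Fin N} {b : ℝ}
    (hj : ((j : ℕ) : ℝ) / N < b ∧ b ≤ (((j : ℕ) : ℝ) + 1) / N)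
    (hk : ((k : ℕ) : ℝ) / N < b ∧ b ≤ (((k : ℕ) : ℝ) + 1) / N) : j = k := by
  have hN0 : (0:ℝ) < N := by exact_mod_cast k.pos
  have h1 := hj.1.trans_le hk.2
  have h2 := hk.1.trans_le hj.2
  rw [div_lt_div_iff_of_pos_right hN0] at h1 h2
  have h1' : (j:ℕ) < (k:ℕ) + 1 := by exact_mod_cast h1
  have h2' : (k:ℕ) < (j:ℕ) + 1 := by exact_mod_cast h2
  exact Fin.ext (by omega)

lemma cell_exists {N : ℕ} (hN : 0 < N) {b : ℝ} (hb : b ∈ Set.Ioc (0:ℝ) 1) :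
    ∃ j : Fin N, ((j : ℕ) : ℝ) / N < b ∧ b ≤ (((j : ℕ) : ℝ) + 1) / N := by
  have hN0 : (0:ℝ) < N := by exact_mod_cast hN
  have hpos : 0 < ⌈b * N⌉₊ := Nat.ceil_pos.mpr (mul_pos hb.1 hN0)
  have hle : ⌈b * N⌉₊ ≤ N := Nat.ceil_le.mpr (mul_le_of_le_one_left hN0.le hb.2)
  refine ⟨⟨⌈b * N⌉₊ - 1, by omega⟩, ?_⟩
  have hc : (((⌈b * N⌉₊ - 1 : ℕ)) : ℝ) = (⌈b * N⌉₊ : ℝ) - 1 := by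
    rw [Nat.cast_sub hpos, Nat.cast_one]
  simp only [hc]
  rw [div_lt_iff₀ hN0, le_div_iff₀ hN0]
  have h1 := Nat.le_ceil (b * N)
  have h2 := Nat.ceil_lt_add_one (mul_pos hb.1 hN0).le
  constructor <;> linarith

lemma cellI_sum_of {N : ℕ} {j : Fin N} {b : ℝ}
    (hj : ((j : ℕ) : ℝ) / N < b ∧ b ≤ (((j : ℕ) : ℝ) + 1) / N) (c : Fin N → ℝ) :
    ∑ k, cellI N k b * c k = c j := by
  rw [Finset.sum_eq_single j]
  · rw [cellI, if_pos hj, one_mul]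
  · intro k _ hk
    rw [cellI, if_neg (fun h => hk (cell_unique h hj)), zero_mul]
  · simp

lemma cellI_sum_not {N : ℕ} {b : ℝ}
    (hj : ¬ ∃ j : Fin N, ((j : ℕ) : ℝ) / N < b ∧ b ≤ (((j : ℕ) : ℝ) + 1) / N) (c : Fin N → ℝ) :
    ∑ k, cellI N k b * c k = 0 :=
  Finset.sum_eq_zero fun k _ => by rw [cellI, if_neg (fun h => hj ⟨k, h⟩), zero_mul]

lemma cellI_measurable (N : ℕ) (j : Fin N) : Measurable (cellI N j) :=
  Measurable.ite (measurableSet_Ioc (a := ((j : ℕ) : ℝ) / N) (b := (((j : ℕ) : ℝ) + 1) / N))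
    measurable_const measurable_const

lemma cellI_abs (N : ℕ) (j : Fin N) (b : ℝ) : |cellI N j b| ≤ 1 := by
  unfold cellI; split_ifs <;> simp

lemma stepGraphon_eq {N : ℕ} (ξ : Fin N → Fin N → ℝ) (a b : ℝ) :
    stepGraphon ξ a b = ∑ i, ∑ j, cellI N i a * cellI N j b * ξ i j := rfl

lemma stepGraphon_of {N : ℕ} (ξ : Fin N → Fin N → ℝ) {a : ℝ} {i : Fin N}
    (hi : ((i : ℕ) : ℝ) / N < a ∧ a ≤ (((i : ℕ) : ℝ) + 1) / N) (b : ℝ) :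
    stepGraphon ξ a b = ∑ j, cellI N j b * ξ i j := by
  rw [stepGraphon_eq, ← cellI_sum_of hi (fun i => ∑ j, cellI N j b * ξ i j)]
  simp_rw [Finset.mul_sum, mul_assoc]

lemma step_integrable {N : ℕ} (c : Fin N → ℝ) :
    IntegrableOn (fun b => ∑ j, cellI N j b * c j) (Set.Ioc (0:ℝ) 1) := by
  refine integrable_finsetSum _ fun j _ => Integrable.mul_const ?_ _
  exact integrableOn_bdd (cellI_measurable N j) 1 fun b _ => cellI_abs N j b

lemma step_integral {N : ℕ} (c : Fin N → ℝ) :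
    ∫ b in Set.Ioc (0:ℝ) 1, ∑ j, cellI N j b * c j = (N:ℝ)⁻¹ * ∑ j, c j := by
  rw [integral_finsetSum]
  · rw [Finset.mul_sum]
    refine Finset.sum_congr rfl fun j _ => ?_
    rw [integral_mul_const]
    congr 1
    have hN0 : (0:ℝ) < N := by exact_mod_cast j.pos
    have : cellI N j = Set.indicator (Set.Ioc (((j : ℕ) : ℝ) / N) ((((j : ℕ) : ℝ) + 1) / N))
        (fun _ => (1:ℝ)) := by
      funext b
      simp [cellI, Set.indicator_apply, Set.mem_Ioc]
    rw [this, setIntegral_indicator measurableSet_Ioc]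
    have hsub : Set.Ioc (((j : ℕ) : ℝ) / N) ((((j : ℕ) : ℝ) + 1) / N) ⊆ Set.Ioc (0:ℝ) 1 := by
      apply Set.Ioc_subset_Ioc
      · positivity
      · rw [div_le_one hN0]
        exact_mod_cast j.isLt
    rw [Set.inter_eq_right.mpr hsub]
    simp only [integral_const, smul_eq_mul, mul_one]
    rw [measureReal_restrict_apply_univ, Real.volume_real_Ioc_of_le]
    · field_simp; ring
    · gcongr; linarith
  · intro j _
    exact (integrableOn_bdd (cellI_measurable N j) 1 fun b _ => cellI_abs N j b).mul_const _
/-- The step function with value `v j` on cell `j`. -/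
noncomputable def stepF {N : ℕ} (v : Fin N → ℝ) (b : ℝ) : ℝ := ∑ j, cellI N j b * v j

lemma stepF_measurable {N : ℕ} (v : Fin N → ℝ) : Measurable (stepF v) :=
  Finset.measurable_fun_sum _ fun j _ => (cellI_measurable N j).mul_const _

lemma stepF_abs {N : ℕ} {v : Fin N → ℝ} (hv : ∀ j, |v j| ≤ 1) (b : ℝ) : |stepF v b| ≤ 1 := by
  by_cases h : ∃ j : Fin N, ((j : ℕ) : ℝ) / N < b ∧ b ≤ (((j : ℕ) : ℝ) + 1) / N
  · obtain ⟨j, hj⟩ := h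
    rw [stepF, cellI_sum_of hj]; exact hv j
  · rw [stepF, cellI_sum_not h]; simp

lemma stepGraphon_measurable {N : ℕ} (ξ : Fin N → Fin N → ℝ) :
    Measurable (Function.uncurry (stepGraphon ξ)) := by
  have : Function.uncurry (stepGraphon ξ)
      = fun q : ℝ × ℝ => ∑ i, ∑ j, cellI N i q.1 * cellI N j q.2 * ξ i j := rfl
  rw [this]
  refine Finset.measurable_fun_sum _ fun i _ => Finset.measurable_fun_sum _ fun j _ => ?_
  exact (((cellI_measurable N i).comp measurable_fst).mul
    ((cellI_measurable N j).comp measurable_snd)).mul_const _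

lemma stepGraphon_abs {N : ℕ} {ξ : Fin N → Fin N → ℝ} (hξ : IsEdgeWeights ξ) (a b : ℝ) :
    |stepGraphon ξ a b| ≤ 1 := by
  by_cases h : ∃ j : Fin N, ((j : ℕ) : ℝ) / N < a ∧ a ≤ (((j : ℕ) : ℝ) + 1) / N
  · obtain ⟨i, hi⟩ := h
    rw [stepGraphon_of ξ hi]
    exact stepF_abs (v := ξ i) (fun j => by
      rcases hξ.1 i j with h | h <;> rw [h] <;> norm_num) b
  · rw [stepGraphon_eq]
    have := cellI_sum_not h (fun i => ∑ j, cellI N j b * ξ i j)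
    simp_rw [Finset.mul_sum, ← mul_assoc] at this
    rw [this]; simp

lemma idx_mem {N : ℕ} (j : Fin N) : (((j : ℕ) : ℝ) + 1) / N ∈ Set.Icc (0:ℝ) 1 := by
  have hN0 : (0:ℝ) < N := by exact_mod_cast j.pos
  constructor
  · positivity
  · rw [div_le_one hN0]
    exact_mod_cast j.isLt

/-- Per-coordinate discretization error estimate. -/
lemma det_coord {N : ℕ} (hN : 0 < N) {ξ : Fin N → Fin N → ℝ} (hξ : IsEdgeWeights ξ)
    {W : ℝ → ℝ → ℝ} (hW : IsGraphon W) {LW : ℝ} (hWLip : GraphonLipschitz W LW)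
    {m : ℝ → ℝ} (hm : Measurable m) (hm1 : ∀ β ∈ Set.Icc (0:ℝ) 1, |m β| ≤ 1) {η θ : ℝ}
    (hη : ∀ g : ℝ → ℝ, Measurable g → (∀ β, |g β| ≤ 1) →
      (∫ α in Set.Ioc (0:ℝ) 1, |∫ β in Set.Ioc (0:ℝ) 1, (stepGraphon ξ α β - W α β) * g β|) ≤ η)
    (hθ : ∫ β in Set.Ioc (0:ℝ) 1,
      |stepF (fun j : Fin N => m ((((j : ℕ) : ℝ) + 1) / N)) β - m β| ≤ θ) :
    (N:ℝ)⁻¹ * ∑ i : Fin N, |(N:ℝ)⁻¹ * (∑ j : Fin N, ξ i j * m ((((j : ℕ) : ℝ) + 1) / N))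
      - ∫ β in Set.Ioc (0:ℝ) 1, W ((((i : ℕ) : ℝ) + 1) / N) β * m β|
      ≤ η + (|LW| * (N:ℝ)⁻¹ + θ) := by
  have hN0 : (0:ℝ) < N := by exact_mod_cast hN
  set v : Fin N → ℝ := fun j => m ((((j : ℕ) : ℝ) + 1) / N) with hv
  have hv1 : ∀ j, |v j| ≤ 1 := fun j => hm1 _ (idx_mem j)
  set g := stepF v with hg
  have hgm : Measurable g := stepF_measurable v
  have hg1 : ∀ β, |g β| ≤ 1 := stepF_abs hv1
  have hη' := hη g hgm hg1
  set d : Fin N → ℝ := fun i => |(N:ℝ)⁻¹ * (∑ j : Fin N, ξ i j * v j)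
      - ∫ β in Set.Ioc (0:ℝ) 1, W ((((i : ℕ) : ℝ) + 1) / N) β * m β| with hd
  set F : ℝ → ℝ := fun α => ∫ β in Set.Ioc (0:ℝ) 1, (stepGraphon ξ α β - W α β) * g β with hF
  have hFm : Measurable F := by
    have : Measurable (Function.uncurry fun α β => (stepGraphon ξ α β - W α β) * g β) :=
      ((stepGraphon_measurable ξ).sub hW.1).mul (hgm.comp measurable_snd)
    exact (this.stronglyMeasurable.integral_prod_right).measurable
  have hsl : ∀ α, Measurable (stepGraphon ξ α) := fun α =>
    (stepGraphon_measurable ξ).comp measurable_prodMk_left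
  have hWabs : ∀ a b, |W a b| ≤ 1 := fun a b => by
    rw [abs_of_nonneg (hW.2.2 a b).1]; exact (hW.2.2 a b).2
  have hI1 : ∀ α, IntegrableOn (fun β => stepGraphon ξ α β * g β) (Set.Ioc (0:ℝ) 1) := fun α =>
    integrableOn_bdd ((hsl α).mul hgm) 1 fun β _ => by
      rw [abs_mul]; exact mul_le_one₀ (stepGraphon_abs hξ α β) (abs_nonneg _) (hg1 β)
  have hI2 : ∀ α, IntegrableOn (fun β => W α β * g β) (Set.Ioc (0:ℝ) 1) := fun α =>
    integrableOn_bdd ((graphon_slice hW α).mul hgm) 1 fun β _ => by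
      rw [abs_mul]; exact mul_le_one₀ (hWabs α β) (abs_nonneg _) (hg1 β)
  have hI3 : ∀ α, IntegrableOn (fun β => W α β * m β) (Set.Ioc (0:ℝ) 1) := fun α =>
    integrableOn_bdd ((graphon_slice hW α).mul hm) 1 fun β hβ => by
      rw [abs_mul]
      exact mul_le_one₀ (hWabs α β) (abs_nonneg _) (hm1 β (Set.Ioc_subset_Icc_self hβ))
  have hI4 : IntegrableOn (fun β => |g β - m β|) (Set.Ioc (0:ℝ) 1) :=
    integrableOn_bdd (_root_.continuous_abs.measurable.comp (hgm.sub hm)) 2 fun β hβ => by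
      rw [abs_abs]
      have := hm1 β (Set.Ioc_subset_Icc_self hβ)
      have h2 := hg1 β
      refine (abs_sub _ _).trans ?_
      linarith
  have hFeq : ∀ α, F α = (∫ β in Set.Ioc (0:ℝ) 1, stepGraphon ξ α β * g β)
      - ∫ β in Set.Ioc (0:ℝ) 1, W α β * g β := fun α => by
    rw [← integral_sub (hI1 α) (hI2 α)]
    simp only [hF, sub_mul]
  have hFI : IntegrableOn (fun α => |F α|) (Set.Ioc (0:ℝ) 1) :=
    integrableOn_bdd (_root_.continuous_abs.measurable.comp hFm) 2 fun α _ => by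
      rw [abs_abs]
      have h := norm_setIntegral_le_of_norm_le_const (μ := volume) (s := Set.Ioc (0:ℝ) 1)
        (f := fun β => (stepGraphon ξ α β - W α β) * g β) (C := 2) (by simp) (fun β _ => by
          rw [Real.norm_eq_abs, abs_mul]
          have h1 := stepGraphon_abs hξ α β
          have h2 := hWabs α β
          have h3 := abs_sub (stepGraphon ξ α β) (W α β)
          have h4 := hg1 β
          nlinarith [abs_nonneg (stepGraphon ξ α β - W α β), abs_nonneg (g β)])
      simpa using h
  have hpt : ∀ α ∈ Set.Ioc (0:ℝ) 1, ∑ j, cellI N j α * d j ≤ |F α| + (|LW| * (N:ℝ)⁻¹ + θ) := by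
    intro α hα
    obtain ⟨i, hi⟩ := cell_exists hN hα
    rw [cellI_sum_of hi]
    have hA : ∫ β in Set.Ioc (0:ℝ) 1, stepGraphon ξ α β * g β
        = (N:ℝ)⁻¹ * ∑ j, ξ i j * v j := by
      rw [← step_integral]
      congr 1
      funext β
      rw [stepGraphon_of ξ hi, hg, stepF]
      by_cases h : ∃ j : Fin N, ((j : ℕ) : ℝ) / N < β ∧ β ≤ (((j : ℕ) : ℝ) + 1) / N
      · obtain ⟨j, hj⟩ := h
        rw [cellI_sum_of hj, cellI_sum_of hj, cellI_sum_of hj]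
      · rw [cellI_sum_not h, cellI_sum_not h, cellI_sum_not h, zero_mul]
    set αi : ℝ := (((i : ℕ) : ℝ) + 1) / N with hαi
    have hαα : |α - αi| ≤ (N:ℝ)⁻¹ := by
      rw [abs_sub_comm, abs_of_nonneg (by linarith [hi.2])]
      have h1 := hi.1
      have : αi = ((i : ℕ) : ℝ) / N + (N:ℝ)⁻¹ := by rw [hαi]; field_simp
      linarith
    have hB : |(∫ β in Set.Ioc (0:ℝ) 1, W α β * g β) - ∫ β in Set.Ioc (0:ℝ) 1, W αi β * m β|
        ≤ |LW| * (N:ℝ)⁻¹ + θ := by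
      rw [← integral_sub (hI2 α) (hI3 αi)]
      refine abs_integral_le_integral_abs.trans ?_
      calc _ ≤ ∫ β in Set.Ioc (0:ℝ) 1, (|LW| * (N:ℝ)⁻¹ + |g β - m β|) := by
            refine setIntegral_mono_on ((hI2 α).sub (hI3 αi)).abs
              (Integrable.add (integrable_const _) hI4) measurableSet_Ioc fun β hβ => ?_
            have hβ' := Set.Ioc_subset_Icc_self hβ
            have e1 : W α β * g β - W αi β * m β
              = (W α β - W αi β) * g β + W αi β * (g β - m β) := by ring
            rw [e1]
            refine (abs_add_le _ _).trans (add_le_add ?_ ?_)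
            · rw [abs_mul]
              refine (mul_le_of_le_one_right (abs_nonneg _) (hg1 β)).trans ?_
              refine (hWLip α β αi β (Set.Ioc_subset_Icc_self hα) hβ' (idx_mem i) hβ').trans ?_
              rw [sub_self, abs_zero, add_zero]
              exact mul_le_mul (le_abs_self _) hαα (abs_nonneg _) (abs_nonneg _)
            · rw [abs_mul]
              exact mul_le_of_le_one_left (abs_nonneg _) (hWabs _ _)
        _ = |LW| * (N:ℝ)⁻¹ + ∫ β in Set.Ioc (0:ℝ) 1, |g β - m β| := by
            rw [integral_add (integrable_const _) hI4]; simp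
        _ ≤ _ := by linarith
    have hdi : d i = |F α + ((∫ β in Set.Ioc (0:ℝ) 1, W α β * g β)
        - ∫ β in Set.Ioc (0:ℝ) 1, W αi β * m β)| := by
      rw [hFeq, hA]
      simp only [hd, hαi]
      congr 1; ring
    rw [hdi]
    exact (abs_add_le _ _).trans (add_le_add le_rfl hB)
  have hint := setIntegral_mono_on (step_integrable d)
    (Integrable.add hFI (integrable_const (|LW| * (N:ℝ)⁻¹ + θ))) measurableSet_Ioc hpt
  rw [step_integral] at hint
  refine hint.trans ?_
  simp only [Pi.add_apply]
  rw [integral_add hFI (integrable_const _)]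
  have : ∫ _a in Set.Ioc (0:ℝ) 1, (|LW| * (N:ℝ)⁻¹ + θ) = |LW| * (N:ℝ)⁻¹ + θ := by simp
  rw [this]
  linarith

lemma step_approx {m : ℝ → ℝ} (hm : Measurable m) (hm1 : ∀ β ∈ Set.Icc (0:ℝ) 1, |m β| ≤ 1)
    {D : Finset ℝ}
    (hc : ∀ β ∈ Set.Icc (0:ℝ) 1, β ∉ D → ContinuousWithinAt m (Set.Icc 0 1) β) :
    Tendsto (fun N : ℕ => ∫ β in Set.Ioc (0:ℝ) 1,
      |stepF (fun j : Fin N => m ((((j : ℕ) : ℝ) + 1) / N)) β - m β|) atTop (nhds 0) := by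
  have hlim : Tendsto (fun N : ℕ => ∫ β in Set.Ioc (0:ℝ) 1,
      |stepF (fun j : Fin N => m ((((j : ℕ) : ℝ) + 1) / N)) β - m β|) atTop
      (nhds (∫ _β in Set.Ioc (0:ℝ) 1, (0:ℝ))) := by
    refine tendsto_integral_of_dominated_convergence (fun _ => 2) (fun N => ?_)
      (integrable_const _) (fun N => ?_) ?_
    · exact (_root_.continuous_abs.measurable.comp
        ((stepF_measurable _).sub hm)).aestronglyMeasurable
    · filter_upwards [self_mem_ae_restrict measurableSet_Ioc] with β hβ
      rw [Real.norm_eq_abs, abs_abs]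
      have h1 := hm1 β (Set.Ioc_subset_Icc_self hβ)
      have h2 := stepF_abs (v := fun j : Fin N => m ((((j : ℕ) : ℝ) + 1) / N))
        (fun j => hm1 _ (idx_mem j)) β
      refine (abs_sub _ _).trans ?_
      linarith
    · have hD : ∀ᵐ β ∂(volume.restrict (Set.Ioc (0:ℝ) 1)), β ∉ D := by
        refine ae_restrict_of_ae ?_
        exact (measure_eq_zero_iff_ae_notMem (s := (D : Set ℝ))).mp (D.finite_toSet.measure_zero _)
      filter_upwards [self_mem_ae_restrict measurableSet_Ioc, hD] with β hβ hβD
      have hβ' := Set.Ioc_subset_Icc_self hβ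
      rw [Metric.tendsto_atTop]
      intro ε hε
      obtain ⟨δ, hδ, hδc⟩ := Metric.continuousWithinAt_iff.mp (hc β hβ' hβD) ε hε
      obtain ⟨n, hn⟩ := exists_nat_gt δ⁻¹
      refine ⟨n + 1, fun N hN => ?_⟩
      have hNpos : 0 < N := by omega
      have hN0 : (0:ℝ) < N := by exact_mod_cast hNpos
      obtain ⟨i, hi⟩ := cell_exists hNpos hβ
      rw [stepF, cellI_sum_of hi, dist_zero_right, Real.norm_eq_abs, abs_abs]
      refine hδc (idx_mem i) ?_
      rw [Real.dist_eq, abs_of_nonneg (by linarith [hi.2])]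
      have h1 := hi.1
      have h2 : (((i : ℕ) : ℝ) + 1) / N = ((i : ℕ) : ℝ) / N + (N:ℝ)⁻¹ := by field_simp
      have h3 : (N:ℝ)⁻¹ < δ := by
        rw [inv_lt_comm₀ hN0 hδ]
        have : (n:ℝ) + 1 ≤ N := by exact_mod_cast hN
        linarith
      linarith
  simpa using hlim

/-- Averaged discretization error goes to zero. -/
lemma det_tendsto [Fintype 𝒳] {W : ℝ → ℝ → ℝ} (hW : IsGraphon W) {LW : ℝ}
    (hWLip : GraphonLipschitz W LW)
    {ξ : (N : ℕ) → Fin N → Fin N → ℝ} (hξ : ∀ N, IsEdgeWeights (ξ N))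
    (hWconv : OpConvergesTo (fun N => stepGraphon (ξ N)) W)
    {ν : ℝ → 𝒳 → ℝ} (hm : ∀ x, Measurable fun α => ν α x)
    (hν : ∀ β ∈ Set.Icc (0:ℝ) 1, ν β ∈ simplex 𝒳) {D : Finset ℝ}
    (hc : ∀ β ∈ Set.Icc (0:ℝ) 1, β ∉ D → ∀ x,
      ContinuousWithinAt (fun α => ν α x) (Set.Icc 0 1) β) {η : ℝ} (hη : 0 < η) :
    ∀ᶠ N : ℕ in atTop, (N:ℝ)⁻¹ * ∑ i : Fin N, detErr (ξ N)
      (fun j => ν ((((j : ℕ) : ℝ) + 1) / N)) (fun j => nbhd W ν ((((j : ℕ) : ℝ) + 1) / N)) i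
      ≤ η := by
  set c : ℝ := (Fintype.card 𝒳 : ℝ) + 1 with hcdef
  have hcpos : 0 < c := by positivity
  set η' := η / (3 * c) with hη'
  have hη'pos : 0 < η' := by positivity
  obtain ⟨N₀, hN₀⟩ := hWconv η' hη'pos
  have hm1 : ∀ x, ∀ β ∈ Set.Icc (0:ℝ) 1, |ν β x| ≤ 1 := fun x β hβ => by
    rw [abs_of_nonneg ((hν β hβ).1 x)]; exact simplex_le_one (hν β hβ) x
  have hθ : ∀ᶠ N : ℕ in atTop, ∀ x, ∫ β in Set.Ioc (0:ℝ) 1,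
      |stepF (fun j : Fin N => ν ((((j : ℕ) : ℝ) + 1) / N) x) β - ν β x| ≤ η' := by
    rw [eventually_all]
    intro x
    exact (step_approx (hm x) (hm1 x) fun β hβ hβD => hc β hβ hβD x).eventually_le_const hη'pos
  have hL : ∀ᶠ N : ℕ in atTop, |LW| * (N:ℝ)⁻¹ ≤ η' := by
    have : Tendsto (fun N : ℕ => |LW| * (N:ℝ)⁻¹) atTop (nhds (|LW| * 0)) :=
      tendsto_inv_atTop_nhds_zero_nat.const_mul _
    rw [mul_zero] at this
    exact this.eventually_le_const hη'pos
  filter_upwards [hθ, hL, eventually_ge_atTop N₀, eventually_gt_atTop 0] with N h1 h2 h3 h4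
  unfold detErr
  rw [Finset.sum_comm, Finset.mul_sum]
  calc _ ≤ ∑ _x : 𝒳, (η' + (η' + η')) := by
        refine Finset.sum_le_sum fun x _ => ?_
        refine (det_coord h4 (hξ N) hW hWLip (hm x) (hm1 x) (hN₀ N h3) (h1 x)).trans ?_
        linarith
    _ = Fintype.card 𝒳 * (3 * η') := by
        simp only [Finset.sum_const, Finset.card_univ, nsmul_eq_mul]; ring
    _ ≤ c * (3 * η') := by gcongr; linarith
    _ = η := by rw [hη']; field_simp

/-- approximate Nash property. Let (𝛑, 𝛍) be a GMFE with α ↦ π^α Lipschitz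
up to finitely many discontinuities. Under Assumptions (W) and (Lip), for any ε, p > 0
there exists N' such that for all N > N', Γ_N(𝛑) is an (ε,p)-Markov–Nash equilibrium:
J^N_i(π¹,…,π^N) ≥ max_{π∈Π} J^N_i(π¹,…,π^{i−1},π,π^{i+1},…,π^N) − ε for all i in a set
𝒲_N of at least ⌊(1−p)N⌋ agents. -/
theorem approximate_nash
    {𝒳 𝒰 : Type*} [Fintype 𝒳] [DecidableEq 𝒳] [Nonempty 𝒳] [Fintype 𝒰] [Nonempty 𝒰]
    (T : ℕ) (μ0 : 𝒳 → ℝ) (hμ0 : μ0 ∈ simplex 𝒳)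
    (P : 𝒳 → 𝒰 → (𝒳 → ℝ) → 𝒳 → ℝ) (hP : IsKernel P)
    (r : 𝒳 → 𝒰 → (𝒳 → ℝ) → ℝ)
    (Lr LP LW : ℝ) (hrLip : RewardLipschitz r Lr) (hPLip : KernelLipschitz P LP)
    (W : ℝ → ℝ → ℝ) (hW : IsGraphon W) (hWLip : GraphonLipschitz W LW)
    (ξ : (N : ℕ) → Fin N → Fin N → ℝ) (hξ : ∀ N, IsEdgeWeights (ξ N))
    (hWconv : OpConvergesTo (fun N => stepGraphon (ξ N)) W)
    (πe : ℝ → ℕ → 𝒳 → 𝒰 → ℝ) (μ : ℕ → ℝ → 𝒳 → ℝ)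
    (hGMFE : IsGMFE T W P r μ0 πe μ)
    (hπeLip : EnsembleLipschitzUpTo πe)
    (ε p : ℝ) (hε : 0 < ε) (hp : 0 < p) :
    ∃ N' : ℕ, ∀ N > N', ∃ Wset : Finset (Fin N),
      ⌊(1 - p) * (N : ℝ)⌋ ≤ (Wset.card : ℤ) ∧
      ∀ i ∈ Wset, ∀ πd : ℕ → 𝒳 → 𝒰 → ℝ, IsPolicy πd →
        JN T r P μ0 (ξ N) (Function.update (gammaN πe N) i πd) i - ε ≤
          JN T r P μ0 (ξ N) (gammaN πe N) i := by
  classical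
  obtain ⟨hπm, hπ, hμ, hopt⟩ := hGMFE
  obtain ⟨L, D, hLD⟩ := hπeLip
  have hs := mf_simplex hW hP hμ0 hπ hμ
  have hGs : ∀ t α, nbhd W (μ t) α ∈ subProb 𝒳 := fun t α => nbhd_subProb hW (hμ.1 t) (hs t) α
  -- reward bound
  set M : ℝ := ∑ x, ∑ u, |r x u 0| + |Lr| with hMdef
  have hM : 0 ≤ M := by positivity
  have h0s : (0 : 𝒳 → ℝ) ∈ subProb 𝒳 := ⟨fun _ => le_rfl, by simp⟩
  have hr : ∀ x u g, g ∈ subProb 𝒳 → |r x u g| ≤ M := fun x u g hg => by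
    have h1 := hrLip x u g 0 hg h0s
    have h2 : l1dist g 0 ≤ 1 := by
      refine le_trans (le_of_eq ?_) hg.2
      exact Finset.sum_congr rfl fun y _ => by simp [abs_of_nonneg (hg.1 y)]
    have h3 : |r x u 0| ≤ ∑ x, ∑ u, |r x u 0| :=
      (Finset.single_le_sum (f := fun u => |r x u 0|) (fun u _ => abs_nonneg _)
        (Finset.mem_univ u)).trans
      (Finset.single_le_sum (f := fun x => ∑ u, |r x u 0|)
        (fun x _ => Finset.sum_nonneg fun u _ => abs_nonneg _) (Finset.mem_univ x))
    have h4 : Lr * l1dist g 0 ≤ |Lr| := by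
      calc Lr * l1dist g 0 ≤ |Lr| * l1dist g 0 :=
            mul_le_mul_of_nonneg_right (le_abs_self _) (l1dist_nonneg _ _)
        _ ≤ |Lr| := mul_le_of_le_one_right (abs_nonneg _) h2
    have h5 : |r x u g| ≤ |r x u g - r x u 0| + |r x u 0| := by
      simpa using abs_add_le (r x u g - r x u 0) (r x u 0)
    linarith
  set c : ℝ := ((Fintype.card 𝒳 : ℕ) : ℝ) with hc
  have hc0 : 0 ≤ c := by positivity
  set K : ℝ := ∑ t ∈ Finset.range T, errK c LP t with hK
  have hK0 : 0 ≤ K := Finset.sum_nonneg fun t _ => errK_nonneg hc0 t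
  have hKt : ∀ t < T, errK c LP t ≤ K := fun t ht =>
    Finset.single_le_sum (f := errK c LP) (fun t _ => errK_nonneg hc0 t) (Finset.mem_range.mpr ht)
  set A : ℝ := T * (|Lr| + M * (T * |LP|)) with hA
  have hA0 : 0 ≤ A := by positivity
  set δ : ℝ := ε / (4 * (A + 1)) with hδ
  have hδ0 : 0 < δ := by positivity
  set κ : ℝ := min 1 (δ / (c * K + 1)) with hκ
  have hκ0 : 0 < κ := lt_min one_pos (by positivity)
  have hκ1 : κ ≤ 1 := min_le_left _ _
  have hcK : c * (K * κ) ≤ δ := by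
    have h1 : κ ≤ δ / (c * K + 1) := min_le_right _ _
    rw [le_div_iff₀ (by positivity)] at h1
    nlinarith
  set η : ℝ := min κ (p * δ / (T + 1)) with hη
  have hη0 : 0 < η := lt_min hκ0 (by positivity)
  have hηT : T * η ≤ p * δ := by
    have h1 : η ≤ p * δ / (T + 1) := min_le_right _ _
    rw [le_div_iff₀ (by positivity)] at h1
    nlinarith
  have hdet : ∀ᶠ N : ℕ in atTop, ∀ t ∈ Finset.range T,
      (N:ℝ)⁻¹ * ∑ i : Fin N, detErr (ξ N) (fun j => μ t ((((j : ℕ) : ℝ) + 1) / N))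
        (fun j => nbhd W (μ t) ((((j : ℕ) : ℝ) + 1) / N)) i ≤ η := by
    rw [Finset.eventually_all]
    intro t _
    exact det_tendsto hW hWLip hξ hWconv (hμ.1 t) (hs t)
      (fun β hβ hβD x => mf_cont hW hWLip hP hPLip hμ0 hπ hμ hLD hβ hβD t x) hη0
  have hNbig : ∀ᶠ N : ℕ in atTop, 1 ≤ κ ^ 2 * (N:ℝ) := by
    have : Tendsto (fun N : ℕ => κ ^ 2 * (N:ℝ)) atTop atTop :=
      tendsto_natCast_atTop_atTop.const_mul_atTop (by positivity)
    exact this.eventually_ge_atTop 1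
  obtain ⟨N', hN'⟩ := eventually_atTop.mp (hdet.and hNbig)
  refine ⟨N', fun N hN => ?_⟩
  obtain ⟨hd, hNκ⟩ := hN' N hN.le
  have hNpos : 0 < N := by omega
  have hN0 : (0:ℝ) < N := by exact_mod_cast hNpos
  set ν : ℕ → Fin N → 𝒳 → ℝ := fun t j => μ t ((((j : ℕ) : ℝ) + 1) / N) with hν
  set G : ℕ → Fin N → 𝒳 → ℝ := fun t j => nbhd W (μ t) ((((j : ℕ) : ℝ) + 1) / N) with hG
  set dd : Fin N → ℝ := fun i => ∑ t ∈ Finset.range T, detErr (ξ N) (ν t) (G t) i with hdd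
  have hde0 : ∀ t i, 0 ≤ detErr (ξ N) (ν t) (G t) i := fun t i =>
    Finset.sum_nonneg fun x _ => abs_nonneg _
  have hdd0 : ∀ i, 0 ≤ dd i := fun i => Finset.sum_nonneg fun t _ => hde0 t i
  refine ⟨Finset.univ.filter fun i => dd i ≤ δ, ?_, ?_⟩
  · -- cardinality
    have hsum : ∑ i, dd i ≤ N * (p * δ) := by
      rw [hdd, Finset.sum_comm]
      calc _ ≤ ∑ _t ∈ Finset.range T, N * η := by
            refine Finset.sum_le_sum fun t ht => ?_
            have := hd t ht
            rwa [inv_mul_le_iff₀ hN0] at this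
        _ = N * (T * η) := by simp; ring
        _ ≤ _ := by gcongr
    have hbad : ((Finset.univ.filter fun i => ¬ dd i ≤ δ).card : ℝ) * δ ≤ N * (p * δ) := by
      refine le_trans ?_ hsum
      calc _ = ∑ _i ∈ Finset.univ.filter (fun i => ¬ dd i ≤ δ), δ := by simp
        _ ≤ ∑ i ∈ Finset.univ.filter (fun i => ¬ dd i ≤ δ), dd i :=
            Finset.sum_le_sum fun i hi => (not_le.mp (Finset.mem_filter.mp hi).2).le
        _ ≤ ∑ i, dd i := Finset.sum_le_sum_of_subset_of_nonneg (Finset.filter_subset _ _)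
            fun i _ _ => hdd0 i
    have hbad' : ((Finset.univ.filter fun i => ¬ dd i ≤ δ).card : ℝ) ≤ N * p := by
      rw [← mul_assoc] at hbad
      exact le_of_mul_le_mul_right hbad hδ0
    have htot : ((Finset.univ.filter fun i => dd i ≤ δ).card : ℝ)
        + ((Finset.univ.filter fun i => ¬ dd i ≤ δ).card : ℝ) = N := by
      have := Finset.card_filter_add_card_filter_not (s := (Finset.univ : Finset (Fin N)))
        (fun i => dd i ≤ δ)
      rw [Finset.card_univ, Fintype.card_fin] at this
      exact_mod_cast this
    have hfl : ((⌊(1 - p) * (N:ℝ)⌋ : ℤ) : ℝ)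
        ≤ (((Finset.univ.filter fun i => dd i ≤ δ).card : ℤ) : ℝ) := by
      refine (Int.floor_le _).trans ?_
      push_cast
      linarith
    exact_mod_cast hfl
  · intro i hi πd hπd
    have hdi : dd i ≤ δ := (Finset.mem_filter.mp hi).2
    have hπr : ∀ j, IsPolicy (gammaN πe N j) := fun j => hπ _ (idx_mem j)
    have key : ∀ πs : Fin N → ℕ → 𝒳 → 𝒰 → ℝ, (∀ j, IsPolicy (πs j)) →
        (∀ j, j ≠ i → πs j = gammaN πe N j) →
        |JN T r P μ0 (ξ N) πs i - Jmf T r P μ0 (fun t => G t i) (πs i)| ≤ A * (2 * δ) := by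
      intro πs hπs hne
      have hdb := dev_bound hP hPLip hμ0 (hξ N) hπs hπr i hne (ν := ν) (G := G)
        (fun t j => hGs t _) (fun j => hμ.2.1 _ (idx_mem j))
        (fun t j x' => hμ.2.2 t _ (idx_mem j) x') hκ0 hκ1 hNκ T
        (fun t ht => (hd t (Finset.mem_range.mpr ht)).trans (min_le_left _ _))
      refine obj_bound hP hPLip hrLip hM hr hμ0 (hξ N) hπs i (fun t => hGs t _)
        (by positivity) T fun t ht => ?_
      have h1 := emp_dist_exp (jointLaw_simplex hP hμ0 (hξ N) hπs t) (hξ N) (G := G t)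
        (hdb t ht.le) i
      have h2 : detErr (ξ N) (ν t) (G t) i ≤ δ := le_trans
        (Finset.single_le_sum (f := fun t => detErr (ξ N) (ν t) (G t) i) (fun t _ => hde0 t i)
          (Finset.mem_range.mpr ht)) hdi
      have h3 : c * (errK c LP t * κ) ≤ c * (K * κ) := by
        have := hKt t ht
        gcongr
      linarith
    have k1 := key (gammaN πe N) hπr (fun _ _ => rfl)
    have k2 := key (Function.update (gammaN πe N) i πd) (fun j => by
      by_cases hj : j = i
      · subst hj; simpa using hπd
      · simpa [hj] using hπr j) (fun j hj => by simp [hj])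
    rw [Function.update_self] at k2
    have k3 : Jmf T r P μ0 (fun t => G t i) πd ≤ Jmf T r P μ0 (fun t => G t i) (gammaN πe N i) :=
      hopt _ (idx_mem i) πd hπd
    have k4 : 2 * (A * (2 * δ)) ≤ ε := by
      have : δ * (4 * (A + 1)) = ε := by rw [hδ]; field_simp
      nlinarith
    have k1' := (abs_le.mp k1).1
    have k2' := (abs_le.mp k2).2
    linarith

end GMFG
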